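/- arXiv:1403.5302 — 2 statements merged into one kernel-verified Lean document; each statement's English description precedes it below -/
import Mathlib

section
/- Let t > 0, λ > 0, η₁ > 1, η₂ > 0, p, q > 0 with p + q = 1, and let U be a probability density on (0,∞) such that U(x) = B₁·x^{−A₃}·exp{A₂·√(log x)}·(log x)^{κ}·(1 + O((log x)^{−1/2})) as x → ∞ and U(x) = B̃₁·x^{Ã₃}·exp{Ã₂·√(log(1/x))}·(log(1/x))^{κ}·(1 + O((log(1/x))^{−1/2})) as x → 0, where B₁, B̃₁ > 0, A₂, Ã₂ ∈ ℝ, κ ∈ ℝ, Ã₃ > −1, and A₃ > 1 + η₁. Define D(x) = e^{−λt}·U(x) + (U ⋆_M H(t,·))(x) for x > 0. Then D(x) = (1/(2√π))·m_{η₁}(U)·(η₁λtp)^{1/4}·exp{η₂λtq/(η₁+η₂) − λt}·(log x)^{−3/4}·exp{2√(η₁λtp)·√(log x)}·x^{−η₁−1}·(1 + O((log x)^{−1/2})) as x → ∞, where m_{η₁}(U) = ∫_0^∞ x^{η₁} U(x) dx < ∞. -/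
open Filter Asymptotics MeasureTheory

/-- `P_{n,k}` from Kou's double exponential jump model: `P_{n,n} = p^n` and, for
`1 ≤ k ≤ n−1`,
`P_{n,k} = Σ_{i=k}^{n−1} C(n−k−1, i−k) C(n,i) (η₁/(η₁+η₂))^{i−k} (η₂/(η₁+η₂))^{n−i} p^i q^{n−i}`. -/
noncomputable def Pcoef (η₁ η₂ p q : ℝ) (n k : ℕ) : ℝ :=
  if k = n then p ^ n
  else ∑ i ∈ Finset.Ico k n,
    ((n - k - 1).choose (i - k) : ℝ) * (n.choose i : ℝ) *
      (η₁ / (η₁ + η₂)) ^ (i - k) * (η₂ / (η₁ + η₂)) ^ (n - i) * p ^ i * q ^ (n - i)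

/-- `Q_{n,k}` from Kou's double exponential jump model: `Q_{n,n} = q^n` and, for
`1 ≤ k ≤ n−1`,
`Q_{n,k} = Σ_{i=k}^{n−1} C(n−k−1, i−k) C(n,i) (η₁/(η₁+η₂))^{n−i} (η₂/(η₁+η₂))^{i−k} p^{n−i} q^i`. -/
noncomputable def Qcoef (η₁ η₂ p q : ℝ) (n k : ℕ) : ℝ :=
  if k = n then q ^ n
  else ∑ i ∈ Finset.Ico k n,
    ((n - k - 1).choose (i - k) : ℝ) * (n.choose i : ℝ) *
      (η₁ / (η₁ + η₂)) ^ (n - i) * (η₂ / (η₁ + η₂)) ^ (i - k) * p ^ (n - i) * q ^ i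

/-- The Poisson weights `π_n = e^{−λt} (λt)^n / n!`. -/
noncomputable def poisCoef (lam t : ℝ) (n : ℕ) : ℝ :=
  Real.exp (-(lam * t)) * (lam * t) ^ n / (n.factorial : ℝ)

/-- `a_k = (η₁^{k+1}/k!) Σ_{n=k+1}^∞ π_n P_{n,k+1}` (the series is reindexed by
`n = m + (k+1)`, `m ≥ 0`). -/
noncomputable def aCoef (lam t η₁ η₂ p q : ℝ) (k : ℕ) : ℝ :=
  η₁ ^ (k + 1) / (k.factorial : ℝ) *
    ∑' m : ℕ, poisCoef lam t (m + (k + 1)) * Pcoef η₁ η₂ p q (m + (k + 1)) (k + 1)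

/-- `b_k = (η₂^{k+1}/k!) Σ_{n=k+1}^∞ π_n Q_{n,k+1}` (the series is reindexed by
`n = m + (k+1)`, `m ≥ 0`). -/
noncomputable def bCoef (lam t η₁ η₂ p q : ℝ) (k : ℕ) : ℝ :=
  η₂ ^ (k + 1) / (k.factorial : ℝ) *
    ∑' m : ℕ, poisCoef lam t (m + (k + 1)) * Qcoef η₁ η₂ p q (m + (k + 1)) (k + 1)

/-- `G₁(t,u) = Σ_{k=0}^∞ a_k u^k`. -/
noncomputable def G1 (lam t η₁ η₂ p q : ℝ) (u : ℝ) : ℝ :=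
  ∑' k : ℕ, aCoef lam t η₁ η₂ p q k * u ^ k

/-- `G₂(t,−u) = Σ_{k=0}^∞ b_k u^k`; `G2m lam t η₁ η₂ p q u` stands for `G₂(t,−u)`. -/
noncomputable def G2m (lam t η₁ η₂ p q : ℝ) (u : ℝ) : ℝ :=
  ∑' k : ℕ, bCoef lam t η₁ η₂ p q k * u ^ k

/-- `H₁(t,x) = G₁(t, log x)` for `x > 1`. -/
noncomputable def H1fun (lam t η₁ η₂ p q : ℝ) (x : ℝ) : ℝ :=
  G1 lam t η₁ η₂ p q (Real.log x)

/-- `H₂(t,x) = G₂(t, log x) = G2m(t, log(1/x))` for `0 < x < 1`. -/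
noncomputable def H2fun (lam t η₁ η₂ p q : ℝ) (x : ℝ) : ℝ :=
  G2m lam t η₁ η₂ p q (Real.log x⁻¹)

/-- The density of the absolutely continuous part of the law of the exponential compound
Poisson factor: `H(t,x) = H₁(t,x) x^{−η₁−1}` for `x > 1` and `H(t,x) = H₂(t,x) x^{η₂−1}`
for `0 < x < 1`. -/
noncomputable def Hfun (lam t η₁ η₂ p q : ℝ) (x : ℝ) : ℝ :=
  if 1 < x then H1fun lam t η₁ η₂ p q x * x ^ (-η₁ - 1)
  else H2fun lam t η₁ η₂ p q x * x ^ (η₂ - 1)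

/-- The Mellin convolution of two measurable functions on `(0,∞)`:
`f ⋆_M g (x) = ∫_0^∞ f(x/t) g(t) dt/t`. -/
noncomputable def mellinConv (f g : ℝ → ℝ) (x : ℝ) : ℝ :=
  ∫ t in Set.Ioi (0:ℝ), f (x / t) * g t / t


/-! ### Part 1: the coefficients -/

lemma jd_hasSum_exp (x : ℝ) : HasSum (fun n : ℕ => x ^ n / (n.factorial : ℝ)) (Real.exp x) := by
  rw [Real.exp_eq_exp_ℝ]
  exact NormedSpace.expSeries_div_hasSum_exp x

/-- The general term of the double series. -/
noncomputable def jdT (A B x y : ℝ) (k j l : ℕ) : ℝ :=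
  ((j + l - 1).choose j : ℝ) * A ^ j * B ^ l * (x ^ (k + j) / ((k + j).factorial : ℝ)) *
    (y ^ l / (l.factorial : ℝ))

lemma jd_term_eq (lam t η₁ η₂ p q : ℝ) (k m : ℕ) :
    poisCoef lam t (m + k) * Pcoef η₁ η₂ p q (m + k) k =
      Real.exp (-(lam * t)) * ∑ j ∈ Finset.range (m + 1),
        jdT (η₁ / (η₁ + η₂)) (η₂ / (η₁ + η₂)) (lam * t * p) (lam * t * q) k j (m - j) := by
  unfold poisCoef Pcoef
  rcases Nat.eq_zero_or_pos m with hm | hm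
  · subst hm
    simp [jdT, mul_pow]
    ring
  · rw [if_neg (by omega), Finset.sum_Ico_eq_sum_range, Finset.sum_range_succ]
    have h0 : jdT (η₁ / (η₁ + η₂)) (η₂ / (η₁ + η₂)) (lam * t * p) (lam * t * q) k m (m - m) = 0 := by
      unfold jdT
      rw [Nat.choose_eq_zero_of_lt (by omega)]
      simp
    rw [h0, add_zero, show m + k - k = m by omega, mul_div_assoc, mul_assoc]
    congr 1
    rw [Finset.mul_sum]
    refine Finset.sum_congr rfl fun j hj => ?_
    have hj' : j < m := Finset.mem_range.mp hj
    unfold jdT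
    obtain ⟨l, rfl⟩ : ∃ l, m = j + l := ⟨m - j, by omega⟩
    rw [show j + l - j = l by omega, show k + j - k = j by omega,
      show j + l + k - (k + j) = l by omega,
      Nat.choose_eq_factorial_div_factorial (n := j + l + k) (k := k + j) (by omega),
      show j + l + k - (k + j) = l by omega,
      Nat.cast_div (by
        have := Nat.factorial_mul_factorial_dvd_factorial (n := j + l + k) (k := k + j) (by omega)
        rwa [show j + l + k - (k + j) = l by omega] at this) (by positivity)]
    push_cast
    have h1 : ((j + l + k).factorial : ℝ) ≠ 0 := by positivity
    have h2 : ((k + j).factorial : ℝ) ≠ 0 := by positivity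
    have h3 : (l.factorial : ℝ) ≠ 0 := by positivity
    rw [mul_pow _ p, mul_pow _ q, show j + l + k = (k + j) + l by ring] at *
    rw [pow_add _ (k + j) l]
    field_simp

lemma jd_factorial_le (k j : ℕ) (hj : 1 ≤ j) :
    (k + 1).factorial * j.factorial ≤ (k + j).factorial := by
  induction j, hj using Nat.le_induction with
  | base => simp
  | succ j hj ih =>
    rw [Nat.factorial_succ j, ← add_assoc, Nat.factorial_succ (k + j)]
    calc (k + 1).factorial * ((j + 1) * j.factorial)
        = (j + 1) * ((k + 1).factorial * j.factorial) := by ring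
      _ ≤ (k + j + 1) * (k + j).factorial := Nat.mul_le_mul (by omega) ih

lemma jdT_nonneg {A B x y : ℝ} (hA : 0 ≤ A) (hB : 0 ≤ B) (hx : 0 ≤ x) (hy : 0 ≤ y) (k j l : ℕ) :
    0 ≤ jdT A B x y k j l := by unfold jdT; positivity

lemma jdT_le {A B x y : ℝ} (hA : 0 ≤ A) (hA1 : A ≤ 1) (hB : 0 ≤ B) (hB1 : B ≤ 1)
    (hx : 0 ≤ x) (hy : 0 ≤ y) (k j l : ℕ) (hj : 1 ≤ j) :
    jdT A B x y k j l ≤ x ^ k / ((k + 1).factorial : ℝ) *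
      (2 ^ (j + l) * (x ^ j / (j.factorial : ℝ)) * (y ^ l / (l.factorial : ℝ))) := by
  unfold jdT
  have h1 : ((j + l - 1).choose j : ℝ) ≤ 2 ^ (j + l) := by
    have : (j + l - 1).choose j ≤ 2 ^ (j + l) :=
      (Nat.choose_le_two_pow _ _).trans (Nat.pow_le_pow_right (by norm_num) (by omega))
    exact_mod_cast this
  have h2 : A ^ j ≤ 1 := pow_le_one₀ hA hA1
  have h3 : B ^ l ≤ 1 := pow_le_one₀ hB hB1
  have h4 : x ^ (k + j) / ((k + j).factorial : ℝ) ≤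
      x ^ (k + j) / ((k + 1).factorial * j.factorial : ℝ) := by
    have : ((k + 1).factorial * j.factorial : ℝ) ≤ (k + j).factorial := by
      exact_mod_cast jd_factorial_le k j hj
    gcongr
  calc _ ≤ 2 ^ (j + l) * 1 * 1 * (x ^ (k + j) / ((k + 1).factorial * j.factorial : ℝ)) *
        (y ^ l / (l.factorial : ℝ)) := by gcongr
    _ = _ := by rw [pow_add x k j]; field_simp

lemma jd_rem_le {A B x y : ℝ} (hA : 0 ≤ A) (hA1 : A ≤ 1) (hB : 0 ≤ B) (hB1 : B ≤ 1)
    (hx : 0 ≤ x) (hy : 0 ≤ y) (k m : ℕ) :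
    |∑ j ∈ Finset.range (m + 1), jdT A B x y k j (m - j) -
      x ^ k / (k.factorial : ℝ) * ((B * y) ^ m / (m.factorial : ℝ))| ≤
      x ^ k / ((k + 1).factorial : ℝ) * ((2 * (x + y)) ^ m / (m.factorial : ℝ)) := by
  rw [Finset.sum_range_succ']
  have h0 : jdT A B x y k 0 (m - 0) =
      x ^ k / (k.factorial : ℝ) * ((B * y) ^ m / (m.factorial : ℝ)) := by
    simp [jdT, mul_pow]; ring
  rw [h0, add_sub_cancel_right, abs_of_nonneg (Finset.sum_nonneg fun j _ => jdT_nonneg hA hB hx hy _ _ _)]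
  have hexp : (2 * (x + y)) ^ m / (m.factorial : ℝ) = ∑ j ∈ Finset.range (m + 1),
      2 ^ (j + (m - j)) * (x ^ j / (j.factorial : ℝ)) * (y ^ (m - j) / ((m - j).factorial : ℝ)) := by
    rw [mul_pow, add_pow, Finset.mul_sum, Finset.sum_div]
    refine Finset.sum_congr rfl fun j hj => ?_
    have hj' : j ≤ m := by have := Finset.mem_range.mp hj; omega
    rw [Nat.cast_choose ℝ hj', show j + (m - j) = m by omega]
    have h1 : (m.factorial : ℝ) ≠ 0 := by positivity
    field_simp
  rw [hexp, Finset.sum_range_succ', mul_add, Finset.mul_sum]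
  have : ∑ j ∈ Finset.range m, jdT A B x y k (j + 1) (m - (j + 1)) ≤
      ∑ i ∈ Finset.range m, x ^ k / ((k + 1).factorial : ℝ) * (2 ^ (i + 1 + (m - (i + 1))) *
        (x ^ (i + 1) / ((i + 1).factorial : ℝ)) *
        (y ^ (m - (i + 1)) / ((m - (i + 1)).factorial : ℝ))) :=
    Finset.sum_le_sum fun j _ => jdT_le hA hA1 hB hB1 hx hy _ _ _ (by omega)
  refine this.trans (le_add_of_nonneg_right (by positivity))

lemma jd_series (lam t η₁ η₂ p q : ℝ) (hL : 0 ≤ lam * t) (hη₁ : 0 < η₁) (hη₂ : 0 < η₂)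
    (hp : 0 ≤ p) (hq : 0 ≤ q) (hpq : p + q = 1) (k : ℕ) :
    |∑' m : ℕ, poisCoef lam t (m + k) * Pcoef η₁ η₂ p q (m + k) k -
      Real.exp (-(lam * t)) * ((lam * t * p) ^ k / (k.factorial : ℝ) *
        Real.exp (η₂ / (η₁ + η₂) * (lam * t * q)))| ≤
      Real.exp (-(lam * t)) * ((lam * t * p) ^ k / ((k + 1).factorial : ℝ) *
        Real.exp (2 * (lam * t))) := by
  set A := η₁ / (η₁ + η₂)
  set B := η₂ / (η₁ + η₂)
  have hA : 0 ≤ A := by positivity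
  have hB : 0 ≤ B := by positivity
  have hA1 : A ≤ 1 := by rw [div_le_one (by positivity)]; linarith
  have hB1 : B ≤ 1 := by rw [div_le_one (by positivity)]; linarith
  set x := lam * t * p with hx'
  set y := lam * t * q with hy'
  have hx : 0 ≤ x := by positivity
  have hy : 0 ≤ y := by positivity
  have hxy : x + y = lam * t := by rw [hx', hy', ← mul_add, hpq, mul_one]
  have hm : HasSum (fun m : ℕ => x ^ k / (k.factorial : ℝ) * ((B * y) ^ m / (m.factorial : ℝ)))
    (x ^ k / (k.factorial : ℝ) * Real.exp (B * y)) := (jd_hasSum_exp _).mul_left _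
  have hr : HasSum (fun m : ℕ => x ^ k / ((k + 1).factorial : ℝ) *
      ((2 * (x + y)) ^ m / (m.factorial : ℝ)))
    (x ^ k / ((k + 1).factorial : ℝ) * Real.exp (2 * (x + y))) := (jd_hasSum_exp _).mul_left _
  have hd := fun m => jd_rem_le hA hA1 hB hB1 hx hy k m
  have hsd : Summable (fun m : ℕ => ∑ j ∈ Finset.range (m + 1), jdT A B x y k j (m - j) -
      x ^ k / (k.factorial : ℝ) * ((B * y) ^ m / (m.factorial : ℝ))) :=
    Summable.of_norm_bounded hr.summable hd
  have hs : Summable (fun m : ℕ => ∑ j ∈ Finset.range (m + 1), jdT A B x y k j (m - j)) := by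
    simpa using hsd.add hm.summable
  simp_rw [jd_term_eq]
  rw [tsum_mul_left, ← mul_sub, abs_mul, abs_of_pos (Real.exp_pos _), ← hm.tsum_eq,
    ← hs.tsum_sub hm.summable, ← hxy, ← hr.tsum_eq]
  refine mul_le_mul_of_nonneg_left ?_ (Real.exp_pos _).le
  rw [← Real.norm_eq_abs]
  exact tsum_of_norm_bounded hr.summable.hasSum
    (fun m => by rw [Real.norm_eq_abs]; exact hd m)

/-- The coefficient estimate. -/
lemma jd_aCoef (lam t η₁ η₂ p q : ℝ) (hL : 0 ≤ lam * t) (hη₁ : 0 < η₁) (hη₂ : 0 < η₂)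
    (hp : 0 ≤ p) (hq : 0 ≤ q) (hpq : p + q = 1) (k : ℕ) :
    |aCoef lam t η₁ η₂ p q k -
      Real.exp (η₂ * lam * t * q / (η₁ + η₂) - lam * t) * (η₁ * lam * t * p) *
        ((η₁ * lam * t * p) ^ k / (k.factorial * (k + 1).factorial : ℝ))| ≤
      Real.exp (lam * t) * (η₁ * lam * t * p) *
        ((η₁ * lam * t * p) ^ k / (k.factorial * (k + 2).factorial : ℝ)) := by
  have h := jd_series lam t η₁ η₂ p q hL hη₁ hη₂ hp hq hpq (k + 1)
  have hf : 0 ≤ η₁ ^ (k + 1) / (k.factorial : ℝ) := by positivity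
  have h2 := mul_le_mul_of_nonneg_left h hf
  rw [← abs_of_nonneg hf, ← abs_mul, abs_of_nonneg hf, mul_sub] at h2
  have e1 : η₁ ^ (k + 1) / (k.factorial : ℝ) * (Real.exp (-(lam * t)) *
      ((lam * t * p) ^ (k + 1) / ((k + 1).factorial : ℝ) *
        Real.exp (η₂ / (η₁ + η₂) * (lam * t * q)))) =
      Real.exp (η₂ * lam * t * q / (η₁ + η₂) - lam * t) * (η₁ * lam * t * p) *
        ((η₁ * lam * t * p) ^ k / (k.factorial * (k + 1).factorial : ℝ)) := by
    rw [show η₂ * lam * t * q / (η₁ + η₂) - lam * t =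
      η₂ / (η₁ + η₂) * (lam * t * q) + -(lam * t) by ring, Real.exp_add,
      show η₁ * lam * t * p = η₁ * (lam * t * p) by ring, mul_pow η₁, pow_succ, pow_succ]
    have h1 : (k.factorial : ℝ) ≠ 0 := by positivity
    have h1 : ((k + 1).factorial : ℝ) ≠ 0 := by positivity
    field_simp
  have e2 : η₁ ^ (k + 1) / (k.factorial : ℝ) * (Real.exp (-(lam * t)) *
      ((lam * t * p) ^ (k + 1) / ((k + 1 + 1).factorial : ℝ) *
        Real.exp (2 * (lam * t)))) =
      Real.exp (lam * t) * (η₁ * lam * t * p) *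
        ((η₁ * lam * t * p) ^ k / (k.factorial * (k + 2).factorial : ℝ)) := by
    rw [show Real.exp (lam * t) = Real.exp (-(lam * t)) * Real.exp (2 * (lam * t)) by
      rw [← Real.exp_add]; congr 1; ring,
      show η₁ * lam * t * p = η₁ * (lam * t * p) by ring, mul_pow η₁, pow_succ, pow_succ]
    have h1 : (k.factorial : ℝ) ≠ 0 := by positivity
    have h1 : ((k + 2).factorial : ℝ) ≠ 0 := by positivity
    field_simp
  rw [e1, e2] at h2
  exact h2

/-! ### Part 2: Bessel type series -/

lemma jd_hasSum_congr {f g : ℕ → ℝ} {a b : ℝ} (h : HasSum f a) (hf : ∀ k, g k = f k) (hb : b = a) :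
    HasSum g b := by
  have : g = f := funext hf
  rw [this, hb]; exact h

lemma jd_W (k : ℕ) : ∫ x in (0:ℝ)..(Real.pi / 2), Real.cos x ^ (2 * k) =
    Real.pi / 2 * ((2 * k).factorial / (4 ^ k * k.factorial * k.factorial : ℝ)) := by
  induction k with
  | zero => simp
  | succ k ih =>
    rw [show 2 * (k + 1) = 2 * k + 2 by ring, integral_cos_pow, ih, Nat.factorial_succ (2 * k + 1),
      Nat.factorial_succ (2 * k), Nat.factorial_succ k]
    simp only [Real.cos_pi_div_two, Real.sin_zero]
    push_cast
    rw [pow_succ (4:ℝ)]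
    field_simp
    ring

lemma jd_M2 (k : ℕ) : ∫ x in (0:ℝ)..(Real.pi / 2), Real.sin x ^ 2 * Real.cos x ^ (2 * k) =
    Real.pi / 4 * ((2 * k).factorial / (4 ^ k * k.factorial * (k + 1).factorial : ℝ)) := by
  have : ∀ x : ℝ, Real.sin x ^ 2 * Real.cos x ^ (2 * k) =
      Real.cos x ^ (2 * k) - Real.cos x ^ (2 * (k + 1)) := by
    intro x; rw [Real.sin_sq]; ring
  simp_rw [this]
  rw [intervalIntegral.integral_sub (by apply Continuous.intervalIntegrable; fun_prop)
    (by apply Continuous.intervalIntegrable; fun_prop), jd_W, jd_W,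
    show 2 * (k + 1) = 2 * k + 2 by ring, Nat.factorial_succ (2 * k + 1),
      Nat.factorial_succ (2 * k), Nat.factorial_succ k]
  push_cast
  rw [pow_succ (4:ℝ)]
  field_simp
  ring

lemma jd_M4 (k : ℕ) : ∫ x in (0:ℝ)..(Real.pi / 2), Real.sin x ^ 4 * Real.cos x ^ (2 * k) =
    3 * Real.pi / 8 * ((2 * k).factorial / (4 ^ k * k.factorial * (k + 2).factorial : ℝ)) := by
  have : ∀ x : ℝ, Real.sin x ^ 4 * Real.cos x ^ (2 * k) =
      Real.sin x ^ 2 * Real.cos x ^ (2 * k) - Real.sin x ^ 2 * Real.cos x ^ (2 * (k + 1)) := by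
    intro x; rw [show Real.sin x ^ 4 = Real.sin x ^ 2 * Real.sin x ^ 2 by ring, Real.sin_sq]; ring
  simp_rw [this]
  rw [intervalIntegral.integral_sub (by apply Continuous.intervalIntegrable; fun_prop)
    (by apply Continuous.intervalIntegrable; fun_prop), jd_M2, jd_M2,
    show 2 * (k + 1) = 2 * k + 2 by ring, Nat.factorial_succ (2 * k + 1),
      Nat.factorial_succ (2 * k), Nat.factorial_succ (k + 1), Nat.factorial_succ k]
  push_cast
  rw [pow_succ (4:ℝ)]
  field_simp
  ring

lemma jd_hasSum_int (z : ℝ) (n : ℕ) : HasSum (fun k : ℕ => z ^ (2 * k) / ((2 * k).factorial : ℝ) *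
      ∫ x in (0:ℝ)..(Real.pi / 2), Real.sin x ^ n * Real.cos x ^ (2 * k))
    (∫ x in (0:ℝ)..(Real.pi / 2), Real.sin x ^ n * Real.cosh (z * Real.cos x)) := by
  have h := intervalIntegral.hasSum_integral_of_dominated_convergence
    (a := 0) (b := Real.pi / 2) (μ := volume)
    (F := fun (k : ℕ) (x : ℝ) => z ^ (2 * k) / ((2 * k).factorial : ℝ) *
      (Real.sin x ^ n * Real.cos x ^ (2 * k)))
    (f := fun x => Real.sin x ^ n * Real.cosh (z * Real.cos x))
    (fun k _ => |z| ^ (2 * k) / ((2 * k).factorial : ℝ))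
    (fun k => by apply Continuous.aestronglyMeasurable; fun_prop)
    (fun k => by
      refine Eventually.of_forall fun x _ => ?_
      rw [Real.norm_eq_abs, abs_mul, abs_div, abs_pow, Nat.abs_cast, abs_mul, abs_pow, abs_pow]
      refine mul_le_of_le_one_right (by positivity) ?_
      exact mul_le_one₀ (pow_le_one₀ (abs_nonneg _) (Real.abs_sin_le_one _)) (by positivity)
        (pow_le_one₀ (abs_nonneg _) (Real.abs_cos_le_one _)))
    (Eventually.of_forall fun x _ => (Real.hasSum_cosh _).summable)
    (by simp)
    (Eventually.of_forall fun x _ => by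
      have := (Real.hasSum_cosh (z * Real.cos x)).mul_left (Real.sin x ^ n)
      exact jd_hasSum_congr this (fun k => by rw [mul_pow]; ring) rfl)
  simpa only [intervalIntegral.integral_const_mul] using h

lemma jd_subst (g : ℝ → ℝ) (hg : Continuous g) :
    ∫ x in (0:ℝ)..(Real.pi / 2), g (1 - Real.cos x) * Real.sin x = ∫ v in (0:ℝ)..1, g v := by
  have := intervalIntegral.integral_comp_mul_deriv (a := 0) (b := Real.pi / 2)
    (f := fun x => 1 - Real.cos x) (f' := Real.sin) (g := g)
    (fun x _ => by simpa using (Real.hasDerivAt_cos x).const_sub 1)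
    Real.continuous_sin.continuousOn hg
  simpa using this

lemma jd_sin_eq {x : ℝ} (hx : x ∈ Set.uIcc 0 (Real.pi / 2)) :
    Real.sqrt ((1 - Real.cos x) * (2 - (1 - Real.cos x))) = Real.sin x := by
  rw [Set.uIcc_of_le (by positivity)] at hx
  rw [show (1 - Real.cos x) * (2 - (1 - Real.cos x)) = 1 - Real.cos x ^ 2 by ring, ← Real.sin_sq]
  exact Real.sqrt_sq (Real.sin_nonneg_of_nonneg_of_le_pi hx.1 (by linarith [hx.2, Real.pi_pos]))

lemma jd_S1_hasSum {y : ℝ} (hy : 0 ≤ y) :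
    HasSum (fun k : ℕ => y ^ k / (k.factorial * (k + 1).factorial : ℝ))
      (4 / Real.pi * ∫ v in (0:ℝ)..1, Real.sqrt (v * (2 - v)) *
        Real.cosh (2 * Real.sqrt y * (1 - v))) := by
  rw [← jd_subst _ (by fun_prop)]
  have h := (jd_hasSum_int (2 * Real.sqrt y) 2).mul_left (4 / Real.pi)
  refine jd_hasSum_congr h (fun k => ?_) ?_
  · rw [jd_M2, mul_pow, pow_mul, pow_mul, Real.sq_sqrt hy]
    have := Real.pi_pos
    norm_num
    field_simp
  · congr 1
    refine intervalIntegral.integral_congr fun x hx => ?_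
    rw [jd_sin_eq hx, sub_sub_cancel]; ring

lemma jd_S2_hasSum {y : ℝ} (hy : 0 ≤ y) :
    HasSum (fun k : ℕ => y ^ k / (k.factorial * (k + 2).factorial : ℝ))
      (8 / (3 * Real.pi) * ∫ v in (0:ℝ)..1, (v * (2 - v)) * Real.sqrt (v * (2 - v)) *
        Real.cosh (2 * Real.sqrt y * (1 - v))) := by
  rw [← jd_subst _ (by fun_prop)]
  have h := (jd_hasSum_int (2 * Real.sqrt y) 4).mul_left (8 / (3 * Real.pi))
  refine jd_hasSum_congr h (fun k => ?_) ?_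
  · rw [jd_M4, mul_pow, pow_mul, pow_mul, Real.sq_sqrt hy]
    have := Real.pi_pos
    norm_num
    field_simp
  · congr 1
    refine intervalIntegral.integral_congr fun x hx => ?_
    rw [jd_sin_eq hx, sub_sub_cancel,
      show (1 - Real.cos x) * (2 - (1 - Real.cos x)) = 1 - Real.cos x ^ 2 by ring, ← Real.sin_sq]
    ring

lemma jd_gammaInt (a : ℝ) (ha : 0 < a) {z : ℝ} (hz : 0 < z) :
    IntegrableOn (fun v : ℝ => v ^ (a - 1) * Real.exp (-(z * v))) (Set.Ioi 0) := by
  have := Real.integral_rpow_mul_exp_neg_mul_Ioi ha hz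
  by_contra hcon
  rw [integral_undef hcon] at this
  have h2 : 0 < (1 / z) ^ a * Real.Gamma a :=
    mul_pos (Real.rpow_pos_of_pos (by positivity) _) (Real.Gamma_pos_of_pos ha)
  linarith

lemma jd_lap1 {z : ℝ} (hz : 0 < z) :
    |(∫ v in (0:ℝ)..1, Real.sqrt (v * (2 - v)) * Real.exp (-(z * v))) -
      Real.sqrt 2 * ((1 / z) ^ (3 / 2 : ℝ) * Real.Gamma (3 / 2))| ≤
      Real.sqrt 2 * ((1 / z) ^ (5 / 2 : ℝ) * Real.Gamma (5 / 2)) := by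
  have i1 := jd_gammaInt (3 / 2) (by norm_num) hz
  have i2 := jd_gammaInt (5 / 2) (by norm_num) hz
  rw [← Real.integral_rpow_mul_exp_neg_mul_Ioi (by norm_num) hz,
    ← Real.integral_rpow_mul_exp_neg_mul_Ioi (by norm_num) hz,
    intervalIntegral.integral_of_le (by norm_num), ← integral_const_mul, ← integral_const_mul]
  have e : ∫ v in Set.Ioc (0:ℝ) 1, Real.sqrt (v * (2 - v)) * Real.exp (-(z * v)) =
      ∫ v in Set.Ioi (0:ℝ), Set.indicator (Set.Ioc (0:ℝ) 1)
        (fun v => Real.sqrt (v * (2 - v)) * Real.exp (-(z * v))) v := by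
    rw [setIntegral_indicator measurableSet_Ioc]
    congr 2
    ext v; simp
  have i3 : IntegrableOn (Set.indicator (Set.Ioc (0:ℝ) 1)
        (fun v => Real.sqrt (v * (2 - v)) * Real.exp (-(z * v)))) (Set.Ioi 0) := by
    refine Integrable.integrableOn ?_
    rw [integrable_indicator_iff measurableSet_Ioc]
    refine Continuous.integrableOn_Ioc (by fun_prop)
  rw [e, ← integral_sub i3 (i1.const_mul _), ← Real.norm_eq_abs]
  refine norm_integral_le_of_norm_le (i2.const_mul _) ?_
  refine (ae_restrict_iff' measurableSet_Ioi).mpr (Eventually.of_forall fun v hv => ?_)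
  have hv0 : 0 < v := hv
  have e1 : v ^ (5 / 2 - 1 : ℝ) = v * Real.sqrt v := by
    rw [show (5 / 2 - 1 : ℝ) = 1 + 1 / 2 by norm_num, Real.rpow_add hv0, Real.rpow_one,
      ← Real.sqrt_eq_rpow]
  have e2 : v ^ (3 / 2 - 1 : ℝ) = Real.sqrt v := by
    rw [show (3 / 2 - 1 : ℝ) = 1 / 2 by norm_num, ← Real.sqrt_eq_rpow]
  rw [e1, e2, Real.norm_eq_abs]
  have hE := Real.exp_pos (-(z * v))
  have h2 : 0 < Real.sqrt 2 := by positivity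
  by_cases h : v ≤ 1
  · rw [Set.indicator_of_mem (show v ∈ Set.Ioc (0:ℝ) 1 from ⟨hv0, h⟩), Real.sqrt_mul hv0.le,
      show √v * √(2 - v) * Real.exp (-(z * v)) - √2 * (√v * Real.exp (-(z * v))) =
        (√(2 - v) - √2) * (√v * Real.exp (-(z * v))) by ring, abs_mul,
        abs_of_nonneg (a := √v * Real.exp (-(z * v))) (by positivity)]
    have h3 : |√(2 - v) - √2| ≤ √2 * v := by
      rw [abs_sub_comm, abs_of_nonneg (sub_nonneg.mpr (Real.sqrt_le_sqrt (by linarith)))]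
      have : √2 * (1 - v) ≤ √(2 - v) := by
        apply Real.le_sqrt_of_sq_le
        rw [mul_pow, Real.sq_sqrt (by norm_num)]
        nlinarith
      nlinarith
    calc _ ≤ √2 * v * (√v * Real.exp (-(z * v))) := by gcongr
      _ = _ := by ring
  · rw [Set.indicator_of_notMem (by simp [h]), zero_sub, abs_neg, abs_of_nonneg (by positivity)]
    have : √v ≤ v * √v := by nlinarith [Real.sqrt_nonneg v]
    gcongr

lemma jd_lap2 {z : ℝ} (hz : 0 < z) :
    (∫ v in (0:ℝ)..1, (v * (2 - v)) * Real.sqrt (v * (2 - v)) * Real.exp (-(z * v))) ≤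
      2 * Real.sqrt 2 * ((1 / z) ^ (5 / 2 : ℝ) * Real.Gamma (5 / 2)) := by
  have i2 := jd_gammaInt (5 / 2) (by norm_num) hz
  rw [← Real.integral_rpow_mul_exp_neg_mul_Ioi (by norm_num) hz,
    intervalIntegral.integral_of_le (by norm_num), ← integral_const_mul]
  calc _ ≤ ∫ v in Set.Ioc (0:ℝ) 1, 2 * √2 * (v ^ (5 / 2 - 1 : ℝ) * Real.exp (-(z * v))) := by
        refine setIntegral_mono_on (Continuous.integrableOn_Ioc (by fun_prop))
          (IntegrableOn.mono_set (i2.const_mul _) Set.Ioc_subset_Ioi_self) measurableSet_Ioc fun v hv => ?_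
        obtain ⟨hv0, hv1⟩ := hv
        have e1 : v ^ (5 / 2 - 1 : ℝ) = v * Real.sqrt v := by
          rw [show (5 / 2 - 1 : ℝ) = 1 + 1 / 2 by norm_num, Real.rpow_add hv0, Real.rpow_one,
            ← Real.sqrt_eq_rpow]
        rw [e1, Real.sqrt_mul hv0.le]
        have : √(2 - v) ≤ √2 := Real.sqrt_le_sqrt (by linarith)
        calc v * (2 - v) * (√v * √(2 - v)) * Real.exp (-(z * v)) ≤
            v * 2 * (√v * √2) * Real.exp (-(z * v)) := by gcongr; linarith
          _ = _ := by ring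
    _ ≤ _ := by
        refine setIntegral_mono_set (i2.const_mul _) ?_ (Set.Ioc_subset_Ioi_self).eventuallyLE
        refine (ae_restrict_iff' measurableSet_Ioi).mpr (Eventually.of_forall fun v hv => ?_)
        have hv0 : 0 < v := hv
        simp only [Pi.zero_apply]
        positivity

lemma jd_z52 {y : ℝ} (hy : 0 < y) : (1 / (2 * √y)) ^ (5 / 2 : ℝ) =
    2 ^ (-(5 / 2) : ℝ) * y ^ (-(5 : ℝ) / 4) := by
  rw [one_div, Real.inv_rpow (by positivity), ← Real.rpow_neg (by positivity),
    Real.mul_rpow (by norm_num) (by positivity), Real.sqrt_eq_rpow, ← Real.rpow_mul hy.le]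
  norm_num

lemma jd_z32 {y : ℝ} (hy : 0 < y) : (1 / (2 * √y)) ^ (3 / 2 : ℝ) =
    1 / (2 * √2) * y ^ (-(3 : ℝ) / 4) := by
  rw [one_div, Real.inv_rpow (by positivity), ← Real.rpow_neg (by positivity),
    Real.mul_rpow (by norm_num) (by positivity), Real.sqrt_eq_rpow, ← Real.rpow_mul hy.le]
  congr 1
  · rw [Real.rpow_neg (by norm_num), show (3 / 2 : ℝ) = 1 + 1 / 2 by norm_num,
      Real.rpow_add (by norm_num), Real.rpow_one, ← Real.sqrt_eq_rpow, one_div]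
  · norm_num

lemma jd_S2_bound : ∃ C : ℝ, 0 ≤ C ∧ ∀ y : ℝ, 1 ≤ y →
    |∑' k : ℕ, y ^ k / (k.factorial * (k + 2).factorial : ℝ)| ≤
      C * (y ^ (-(5 : ℝ) / 4) * Real.exp (2 * √y)) := by
  refine ⟨8 / (3 * Real.pi) * (2 * √2 * (2 ^ (-(5 / 2) : ℝ) * Real.Gamma (5 / 2))), ?_, ?_⟩
  · have := Real.Gamma_pos_of_pos (show (0:ℝ) < 5 / 2 by norm_num)
    have := Real.pi_pos
    positivity
  intro y hy
  have hy0 : 0 < y := by linarith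
  rw [abs_of_nonneg (tsum_nonneg fun k => by positivity), (jd_S2_hasSum hy0.le).tsum_eq]
  have hz : 0 < 2 * √y := by positivity
  have h := jd_lap2 hz
  rw [jd_z52 hy0] at h
  have hle : (∫ v in (0:ℝ)..1, (v * (2 - v)) * Real.sqrt (v * (2 - v)) *
        Real.cosh (2 * Real.sqrt y * (1 - v))) ≤ Real.exp (2 * √y) *
      ∫ v in (0:ℝ)..1, (v * (2 - v)) * Real.sqrt (v * (2 - v)) * Real.exp (-(2 * √y * v)) := by
    rw [← intervalIntegral.integral_const_mul]
    refine intervalIntegral.integral_mono_on (by norm_num)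
      (by apply Continuous.intervalIntegrable; fun_prop)
      (by apply Continuous.intervalIntegrable; fun_prop) fun v hv => ?_
    obtain ⟨hv0, hv1⟩ := hv
    have h1 : Real.cosh (2 * √y * (1 - v)) ≤ Real.exp (2 * √y) * Real.exp (-(2 * √y * v)) := by
      rw [← Real.exp_add, Real.cosh_eq]
      have : Real.exp (-(2 * √y * (1 - v))) ≤ Real.exp (2 * √y * (1 - v)) := by
        apply Real.exp_le_exp.mpr
        have : 0 ≤ 2 * √y * (1 - v) := mul_nonneg hz.le (by linarith)
        linarith
      rw [show 2 * √y + -(2 * √y * v) = 2 * √y * (1 - v) by ring]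
      linarith
    have h2 : 0 ≤ v * (2 - v) := mul_nonneg hv0 (by linarith)
    calc _ ≤ v * (2 - v) * √(v * (2 - v)) * (Real.exp (2 * √y) * Real.exp (-(2 * √y * v))) := by
          gcongr
      _ = _ := by ring
  have hpi := Real.pi_pos
  calc _ ≤ 8 / (3 * Real.pi) * (Real.exp (2 * √y) * (2 * √2 * (2 ^ (-(5 / 2) : ℝ) *
          y ^ (-(5 : ℝ) / 4) * Real.Gamma (5 / 2)))) := by
        refine mul_le_mul_of_nonneg_left (hle.trans ?_) (by positivity)
        exact mul_le_mul_of_nonneg_left h (by positivity)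
    _ = _ := by ring

lemma jd_S1_asymp : ∃ C : ℝ, 0 ≤ C ∧ ∀ y : ℝ, 1 ≤ y →
    |∑' k : ℕ, y ^ k / (k.factorial * (k + 1).factorial : ℝ) -
      1 / (2 * √Real.pi) * (y ^ (-(3 : ℝ) / 4) * Real.exp (2 * √y))| ≤
      C * (y ^ (-(5 : ℝ) / 4) * Real.exp (2 * √y)) := by
  have hpi := Real.pi_pos
  have hG := Real.Gamma_pos_of_pos (show (0:ℝ) < 5 / 2 by norm_num)
  refine ⟨2 / Real.pi * (√2 * (2 ^ (-(5 / 2) : ℝ) * Real.Gamma (5 / 2)) + 1), by positivity, ?_⟩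
  intro y hy
  have hy0 : 0 < y := by linarith
  rw [(jd_S1_hasSum hy0.le).tsum_eq]
  have hz : 0 < 2 * √y := by positivity
  have h := jd_lap1 hz
  rw [jd_z52 hy0, jd_z32 hy0] at h
  have hG3 : Real.Gamma (3 / 2) = √Real.pi / 2 := by
    rw [show (3 / 2 : ℝ) = 1 / 2 + 1 by norm_num, Real.Gamma_add_one (by norm_num),
      Real.Gamma_one_half_eq]
    ring
  rw [hG3] at h
  set I := ∫ v in (0:ℝ)..1, √(v * (2 - v)) * Real.exp (-(2 * √y * v)) with hI
  set I' := ∫ v in (0:ℝ)..1, √(v * (2 - v)) * Real.exp (-(2 * √y * (1 - v))) with hI'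
  have hsplit : (∫ v in (0:ℝ)..1, √(v * (2 - v)) * Real.cosh (2 * √y * (1 - v))) =
      Real.exp (2 * √y) / 2 * I + 1 / 2 * I' := by
    rw [hI, hI', ← intervalIntegral.integral_const_mul, ← intervalIntegral.integral_const_mul,
      ← intervalIntegral.integral_add (by apply Continuous.intervalIntegrable; fun_prop)
        (by apply Continuous.intervalIntegrable; fun_prop)]
    refine intervalIntegral.integral_congr fun v _ => ?_
    rw [Real.cosh_eq, show 2 * √y * (1 - v) = 2 * √y + -(2 * √y * v) by ring, Real.exp_add]
    ring
  have hI'0 : |I'| ≤ 1 := by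
    have := intervalIntegral.norm_integral_le_of_norm_le_const (a := 0) (b := 1) (C := 1)
      (f := fun v : ℝ => √(v * (2 - v)) * Real.exp (-(2 * √y * (1 - v)))) (fun v hv => by
        rw [Set.uIoc_of_le (by norm_num)] at hv
        rw [Real.norm_eq_abs, abs_of_nonneg (by positivity)]
        refine mul_le_one₀ ?_ (by positivity) ?_
        · rw [Real.sqrt_le_one]; nlinarith [sq_nonneg (v - 1)]
        · rw [Real.exp_le_one_iff]
          have : 0 ≤ 2 * √y * (1 - v) := mul_nonneg hz.le (by linarith [hv.2])
          linarith)
    simpa using this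
  have hbig : 1 ≤ 1 * (y ^ (-(5 : ℝ) / 4) * Real.exp (2 * √y)) := by
    have h1 : y ^ ((5 : ℝ) / 4) ≤ Real.exp (2 * √y) := by
      have hs : 1 ≤ √y := by rw [Real.one_le_sqrt]; exact hy
      have h2 : y ^ ((5 : ℝ) / 4) ≤ y ^ ((3 : ℝ) / 2) :=
        Real.rpow_le_rpow_of_exponent_le hy (by norm_num)
      have h3 : y ^ ((3 : ℝ) / 2) = √y ^ 3 := by
        rw [Real.sqrt_eq_rpow, ← Real.rpow_natCast, ← Real.rpow_mul hy0.le]; norm_num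
      have h4 := Real.pow_div_factorial_le_exp (2 * √y) hz.le 3
      have h5 : (2 * √y) ^ 3 / ((3 : ℕ).factorial : ℝ) = 8 / 6 * √y ^ 3 := by
        rw [mul_pow, show (3 : ℕ).factorial = 6 from rfl]; norm_num; ring
      have h6 : 0 ≤ √y ^ 3 := by positivity
      linarith
    rw [one_mul, neg_div, Real.rpow_neg hy0.le, ← div_eq_inv_mul, le_div_iff₀ (by positivity)]
    linarith
  rw [hsplit]
  have e : 4 / Real.pi * (Real.exp (2 * √y) / 2 * I + 1 / 2 * I') -
      1 / (2 * √Real.pi) * (y ^ (-(3 : ℝ) / 4) * Real.exp (2 * √y)) =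
      2 / Real.pi * (Real.exp (2 * √y) * (I - √2 * (1 / (2 * √2) * y ^ (-(3 : ℝ) / 4) *
        (√Real.pi / 2))) + I') := by
    have : √Real.pi * √Real.pi = Real.pi := Real.mul_self_sqrt hpi.le
    have h2 : √2 ≠ 0 := by positivity
    have h3 : 1 / (2 * √Real.pi) = √Real.pi / (2 * Real.pi) := by
      rw [div_eq_div_iff (by positivity) (by positivity)]; linear_combination -2 * this
    rw [h3]
    field_simp
    ring
  rw [e, abs_mul, abs_of_nonneg (a := 2 / Real.pi) (by positivity), mul_assoc (2 / Real.pi)]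
  refine mul_le_mul_of_nonneg_left ((abs_add_le _ _).trans ?_) (by positivity)
  rw [abs_mul, abs_of_pos (Real.exp_pos _), add_mul]
  refine add_le_add ?_ (hI'0.trans hbig)
  calc _ ≤ Real.exp (2 * √y) * (√2 * (2 ^ (-(5 / 2) : ℝ) * y ^ (-(5 : ℝ) / 4) *
        Real.Gamma (5 / 2))) := mul_le_mul_of_nonneg_left h (Real.exp_pos _).le
    _ = _ := by ring

/-! ### Part 3: the function `G1` -/

lemma jd_aCoef_abs (lam t η₁ η₂ p q : ℝ) (hL : 0 ≤ lam * t) (hη₁ : 0 < η₁) (hη₂ : 0 < η₂)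
    (hp : 0 ≤ p) (hq : 0 ≤ q) (hpq : p + q = 1) (δ : ℝ) (hδ : 0 < δ) :
    ∃ M : ℝ, 0 ≤ M ∧ ∀ k, |aCoef lam t η₁ η₂ p q k| ≤ M * (δ ^ k / (k.factorial : ℝ)) := by
  have hc : 0 ≤ η₁ * lam * t * p := by
    rw [show η₁ * lam * t * p = η₁ * (lam * t) * p by ring]; positivity
  set c := η₁ * lam * t * p with hcdef
  set E := Real.exp (η₂ * lam * t * q / (η₁ + η₂) - lam * t) with hE
  refine ⟨(E * c + Real.exp (lam * t) * c) * Real.exp (c / δ), by positivity, fun k => ?_⟩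
  have h := jd_aCoef lam t η₁ η₂ p q hL hη₁ hη₂ hp hq hpq k
  rw [← hcdef, ← hE] at h
  have hk1 : c ^ k / (k.factorial * (k + 1).factorial : ℝ) ≤
      Real.exp (c / δ) * (δ ^ k / (k.factorial : ℝ)) := by
    have h1 := Real.pow_div_factorial_le_exp (c / δ) (by positivity) k
    have h2 : (k.factorial : ℝ) ≤ (k + 1).factorial := by
      exact_mod_cast Nat.factorial_le (by omega)
    calc c ^ k / (k.factorial * (k + 1).factorial : ℝ)
        ≤ c ^ k / (k.factorial * k.factorial : ℝ) := by gcongr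
      _ = (c / δ) ^ k / k.factorial * (δ ^ k / k.factorial) := by
          rw [div_pow]; field_simp
      _ ≤ _ := by gcongr
  have hk2 : c ^ k / (k.factorial * (k + 2).factorial : ℝ) ≤
      c ^ k / (k.factorial * (k + 1).factorial : ℝ) := by
    have h2 : ((k + 1).factorial : ℝ) ≤ (k + 2).factorial := by
      exact_mod_cast Nat.factorial_le (by omega)
    gcongr
  have h3 : |E * c * (c ^ k / (k.factorial * (k + 1).factorial : ℝ))| =
      E * c * (c ^ k / (k.factorial * (k + 1).factorial : ℝ)) := abs_of_nonneg (by positivity)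
  have h4 : |aCoef lam t η₁ η₂ p q k| ≤
      E * c * (c ^ k / (k.factorial * (k + 1).factorial : ℝ)) +
      Real.exp (lam * t) * c * (c ^ k / (k.factorial * (k + 2).factorial : ℝ)) := by
    have := abs_sub_abs_le_abs_sub (aCoef lam t η₁ η₂ p q k)
      (E * c * (c ^ k / (k.factorial * (k + 1).factorial : ℝ)))
    linarith
  calc _ ≤ _ := h4
    _ ≤ E * c * (Real.exp (c / δ) * (δ ^ k / (k.factorial : ℝ))) +
      Real.exp (lam * t) * c * (Real.exp (c / δ) * (δ ^ k / (k.factorial : ℝ))) := by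
        have := hk2.trans hk1
        gcongr
    _ = _ := by ring

lemma jd_G1_summable (lam t η₁ η₂ p q : ℝ) (hL : 0 ≤ lam * t) (hη₁ : 0 < η₁) (hη₂ : 0 < η₂)
    (hp : 0 ≤ p) (hq : 0 ≤ q) (hpq : p + q = 1) (u : ℝ) :
    Summable (fun k : ℕ => aCoef lam t η₁ η₂ p q k * u ^ k) := by
  obtain ⟨M, hM, h⟩ := jd_aCoef_abs lam t η₁ η₂ p q hL hη₁ hη₂ hp hq hpq 1 one_pos
  refine Summable.of_norm_bounded ((Real.summable_pow_div_factorial |u|).mul_left M) fun k => ?_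
  rw [Real.norm_eq_abs, abs_mul, abs_pow]
  calc _ ≤ M * (1 ^ k / (k.factorial : ℝ)) * |u| ^ k := by gcongr; exact h k
    _ = _ := by rw [one_pow]; ring

lemma jd_G1_growth (lam t η₁ η₂ p q : ℝ) (hL : 0 ≤ lam * t) (hη₁ : 0 < η₁) (hη₂ : 0 < η₂)
    (hp : 0 ≤ p) (hq : 0 ≤ q) (hpq : p + q = 1) (δ : ℝ) (hδ : 0 < δ) :
    ∃ M : ℝ, 0 ≤ M ∧ ∀ u, 0 ≤ u → |G1 lam t η₁ η₂ p q u| ≤ M * Real.exp (δ * u) := by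
  obtain ⟨M, hM, h⟩ := jd_aCoef_abs lam t η₁ η₂ p q hL hη₁ hη₂ hp hq hpq δ hδ
  refine ⟨M, hM, fun u hu => ?_⟩
  unfold G1
  rw [← Real.norm_eq_abs]
  refine tsum_of_norm_bounded ((jd_hasSum_exp (δ * u)).mul_left M) fun k => ?_
  rw [Real.norm_eq_abs, abs_mul, abs_pow, abs_of_nonneg hu]
  calc _ ≤ M * (δ ^ k / (k.factorial : ℝ)) * u ^ k := by gcongr; exact h k
    _ = _ := by rw [mul_pow]; ring

lemma jd_G1_meas (lam t η₁ η₂ p q : ℝ) (hL : 0 ≤ lam * t) (hη₁ : 0 < η₁) (hη₂ : 0 < η₂)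
    (hp : 0 ≤ p) (hq : 0 ≤ q) (hpq : p + q = 1) : Measurable (G1 lam t η₁ η₂ p q) := by
  refine measurable_of_tendsto_metrizable
    (f := fun n u => ∑ k ∈ Finset.range n, aCoef lam t η₁ η₂ p q k * u ^ k) (fun n => ?_) ?_
  · fun_prop
  · rw [tendsto_pi_nhds]
    intro u
    exact (jd_G1_summable lam t η₁ η₂ p q hL hη₁ hη₂ hp hq hpq u).hasSum.tendsto_sum_nat

/-- The comparison function `u^{-3/4} exp(β √u)`. -/
noncomputable def jdg (β u : ℝ) : ℝ := Real.exp (-(3 / 4) * Real.log u + β * √u)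

lemma jdg_pos (β u : ℝ) : 0 < jdg β u := Real.exp_pos _

lemma jdg_eq (β : ℝ) {u : ℝ} (hu : 0 < u) :
    jdg β u = u ^ (-(3 : ℝ) / 4) * Real.exp (β * √u) := by
  rw [jdg, Real.exp_add, Real.rpow_def_of_pos hu]
  congr 2; ring

lemma jdg_div_eq (β : ℝ) {u : ℝ} (hu : 0 < u) :
    jdg β u / √u = u ^ (-(5 : ℝ) / 4) * Real.exp (β * √u) := by
  rw [jdg_eq β hu, Real.sqrt_eq_rpow u, show (-(5:ℝ) / 4) = -(3 : ℝ) / 4 - 1 / 2 by norm_num,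
    Real.rpow_sub hu]
  ring

lemma jd_G1_asymp (lam t η₁ η₂ p q : ℝ) (hL : 0 < lam * t) (hη₁ : 0 < η₁) (hη₂ : 0 < η₂)
    (hp : 0 < p) (hq : 0 ≤ q) (hpq : p + q = 1) :
    ∃ C u₀ : ℝ, 0 ≤ C ∧ 1 ≤ u₀ ∧ ∀ u, u₀ ≤ u →
      |G1 lam t η₁ η₂ p q u - (1 / (2 * √Real.pi) * (η₁ * lam * t * p) ^ ((1:ℝ) / 4) *
        Real.exp (η₂ * lam * t * q / (η₁ + η₂) - lam * t)) *
          jdg (2 * √(η₁ * lam * t * p)) u| ≤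
        C * (jdg (2 * √(η₁ * lam * t * p)) u / √u) := by
  have hc : 0 < η₁ * lam * t * p := by
    rw [show η₁ * lam * t * p = η₁ * (lam * t) * p by ring]; positivity
  have ha := jd_aCoef lam t η₁ η₂ p q hL.le hη₁ hη₂ hp.le hq hpq
  have hsum := jd_G1_summable lam t η₁ η₂ p q hL.le hη₁ hη₂ hp.le hq hpq
  set c := η₁ * lam * t * p with hcdef
  set E := Real.exp (η₂ * lam * t * q / (η₁ + η₂) - lam * t) with hE
  have hE0 : 0 < E := Real.exp_pos _
  obtain ⟨C1, hC1, h1⟩ := jd_S1_asymp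
  obtain ⟨C2, hC2, h2⟩ := jd_S2_bound
  refine ⟨(E * c * C1 + Real.exp (lam * t) * c * C2) * c ^ (-(5 : ℝ) / 4), max 1 (1 / c),
    by positivity, le_max_left _ _, fun u hu => ?_⟩
  have hu1 : 1 ≤ u := (le_max_left _ _).trans hu
  have hu0 : 0 < u := by linarith
  have hy : 1 ≤ c * u := by
    have := (le_max_right _ _).trans hu
    rw [div_le_iff₀ hc] at this; linarith
  have hy0 : 0 < c * u := by linarith
  have s1 := (jd_S1_hasSum hy0.le).summable
  have s2 := (jd_S2_hasSum hy0.le).summable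
  have d1 : |G1 lam t η₁ η₂ p q u - E * c * ∑' k : ℕ, (c * u) ^ k /
      (k.factorial * (k + 1).factorial : ℝ)| ≤
      Real.exp (lam * t) * c * ∑' k : ℕ, (c * u) ^ k / (k.factorial * (k + 2).factorial : ℝ) := by
    unfold G1
    rw [← tsum_mul_left, ← tsum_mul_left, ← (hsum u).tsum_sub (s1.mul_left _), ← Real.norm_eq_abs]
    refine tsum_of_norm_bounded (s2.mul_left _).hasSum fun k => ?_
    rw [Real.norm_eq_abs]
    have := mul_le_mul_of_nonneg_right (ha k) (show 0 ≤ u ^ k by positivity)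
    rw [← abs_of_nonneg (show 0 ≤ u ^ k by positivity), ← abs_mul,
      abs_of_nonneg (show 0 ≤ u ^ k by positivity)] at this
    calc _ = _ := by congr 1; rw [mul_pow]; ring
      _ ≤ _ := this
      _ = _ := by rw [mul_pow]; ring
  have hsq : 2 * √(c * u) = 2 * √c * √u := by rw [Real.sqrt_mul hc.le]; ring
  have k1 := h1 _ hy
  have k2 := (le_abs_self _).trans (h2 _ hy)
  have r5 : (c * u) ^ (-(5 : ℝ) / 4) * Real.exp (2 * √(c * u)) =
      c ^ (-(5 : ℝ) / 4) * (jdg (2 * √c) u / √u) := by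
    rw [hsq, Real.mul_rpow hc.le hu0.le, jdg_div_eq _ hu0]; ring
  have r3 : (c * u) ^ (-(3 : ℝ) / 4) * Real.exp (2 * √(c * u)) =
      c ^ (-(3 : ℝ) / 4) * jdg (2 * √c) u := by
    rw [hsq, Real.mul_rpow hc.le hu0.le, jdg_eq _ hu0]; ring
  rw [r5] at k1 k2
  rw [r3] at k1
  set g := jdg (2 * √c) u
  have hcc : c ^ ((1:ℝ) / 4) = c * c ^ (-(3 : ℝ) / 4) := by
    nth_rewrite 2 [← Real.rpow_one c]
    rw [← Real.rpow_add hc]; norm_num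
  set S1 := ∑' k : ℕ, (c * u) ^ k / (k.factorial * (k + 1).factorial : ℝ)
  set S2 := ∑' k : ℕ, (c * u) ^ k / (k.factorial * (k + 2).factorial : ℝ)
  have k1' := mul_le_mul_of_nonneg_left k1 (show 0 ≤ E * c by positivity)
  rw [← abs_of_nonneg (show 0 ≤ E * c by positivity), ← abs_mul,
      abs_of_nonneg (show 0 ≤ E * c by positivity)] at k1'
  have k2' := mul_le_mul_of_nonneg_left k2 (show 0 ≤ Real.exp (lam * t) * c by positivity)
  calc _ = |(G1 lam t η₁ η₂ p q u - E * c * S1) +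
        E * c * (S1 - 1 / (2 * √Real.pi) * (c ^ (-(3:ℝ) / 4) * g))| := by
        congr 1; rw [hcc]; ring
    _ ≤ _ := abs_add_le _ _
    _ ≤ _ := add_le_add (d1.trans k2') k1'
    _ = _ := by ring

/-! ### Part 4: the shift estimate -/

lemma jd_exp_sub_one (θ : ℝ) : |Real.exp θ - 1| ≤ |θ| * Real.exp |θ| := by
  rcases le_total 0 θ with h | h
  · rw [abs_of_nonneg h, abs_of_nonneg (by linarith [Real.add_one_le_exp θ])]
    have h1 := Real.add_one_le_exp (-θ)
    have h2 : Real.exp (-θ) * Real.exp θ = 1 := by rw [← Real.exp_add]; simp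
    nlinarith [Real.exp_pos θ]
  · rw [abs_of_nonpos h, abs_of_nonpos (by linarith [Real.exp_le_one_iff.mpr h])]
    have h1 := Real.add_one_le_exp θ
    have h2 : 1 ≤ Real.exp (-θ) := Real.one_le_exp (by linarith)
    nlinarith

lemma jd_log_sub {u w : ℝ} (hu : 0 < u) (hw : 0 < w) {s : ℝ} (hs : 0 < s) (hsu : s ≤ u)
    (hsw : s ≤ w) : |Real.log w - Real.log u| ≤ |w - u| / s := by
  have key : ∀ a b : ℝ, 0 < a → 0 < b → s ≤ a → Real.log b - Real.log a ≤ |b - a| / s := by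
    intro a b ha hb hsa
    rw [← Real.log_div hb.ne' ha.ne']
    have h1 := Real.log_le_sub_one_of_pos (show 0 < b / a by positivity)
    calc _ ≤ _ := h1
      _ = (b - a) / a := by field_simp
      _ ≤ |b - a| / a := by gcongr; exact le_abs_self _
      _ ≤ _ := by gcongr
  rw [abs_le]
  have h1 := key u w hu hw hsu
  have h2 := key w u hw hu hsw
  rw [abs_sub_comm] at h2
  constructor <;> linarith

lemma jd_shift_exp {β u w v : ℝ} (hβ : 0 ≤ β) (hu : 1 ≤ u) (hw : w = u - v) (hv : |v| ≤ u / 2) :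
    |(-(3 / 4) * Real.log w + β * √w) - (-(3 / 4) * Real.log u + β * √u)| ≤
      (3 / 2 + β) * (|v| / √u) := by
  have hv' := abs_le.mp hv
  have hu0 : 0 < u := by linarith
  have hw0 : u / 2 ≤ w := by linarith
  have hw1 : 0 < w := by linarith
  have hwu : |w - u| = |v| := by rw [hw, show u - v - u = -v by ring, abs_neg]
  have hs1 : 1 ≤ √u := by rw [Real.one_le_sqrt]; exact hu
  have hss : √u * √u = u := Real.mul_self_sqrt hu0.le
  have h1 : |Real.log w - Real.log u| ≤ 2 * (|v| / √u) := by
    refine (jd_log_sub hu0 hw1 (s := u / 2) (by linarith) (by linarith) hw0).trans ?_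
    rw [hwu]
    calc |v| / (u / 2) = 2 * (|v| / u) := by field_simp
      _ ≤ _ := by
        have : √u ≤ u := by nlinarith
        gcongr
  have h2 : |√w - √u| ≤ |v| / √u := by
    rw [le_div_iff₀ (by linarith), ← hwu]
    have : w - u = (√w - √u) * (√w + √u) := by
      ring_nf; rw [Real.sq_sqrt hw1.le, Real.sq_sqrt hu0.le]
    rw [this, abs_mul]
    refine mul_le_mul_of_nonneg_left ?_ (abs_nonneg _)
    exact le_trans (by linarith [Real.sqrt_nonneg w]) (le_abs_self _)
  calc _ = |-(3 / 4) * (Real.log w - Real.log u) + β * (√w - √u)| := by congr 1; ring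
    _ ≤ |-(3 / 4) * (Real.log w - Real.log u)| + |β * (√w - √u)| := abs_add_le _ _
    _ = 3 / 4 * |Real.log w - Real.log u| + β * |√w - √u| := by
        rw [abs_mul, abs_mul, abs_of_nonneg hβ]; norm_num
    _ ≤ 3 / 4 * (2 * (|v| / √u)) + β * (|v| / √u) := by gcongr
    _ = _ := by ring

set_option maxHeartbeats 2000000 in
lemma jd_shift (Ψ : ℝ → ℝ) (β K : ℝ) (hβ : 0 ≤ β)
    (ha : ∃ C u₀ : ℝ, 0 ≤ C ∧ 1 ≤ u₀ ∧ ∀ w, u₀ ≤ w → |Ψ w - K * jdg β w| ≤ C * (jdg β w / √w))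
    (hb : ∀ δ : ℝ, 0 < δ → ∃ M : ℝ, 0 ≤ M ∧ ∀ w, |Ψ w| ≤ M * Real.exp (δ * |w|))
    (ε : ℝ) (hε : 0 < ε) :
    ∃ C u₁ : ℝ, 0 ≤ C ∧ 1 ≤ u₁ ∧ ∀ u, u₁ ≤ u → ∀ v,
      |Ψ (u - v) - K * jdg β u| ≤ C * (jdg β u / √u) * Real.exp (ε * |v|) := by
  obtain ⟨C, u₀, hC, hu₀, ha⟩ := ha
  set δ := ε / 8 with hδ
  have hδ0 : 0 < δ := by positivity
  obtain ⟨M, hM, hb⟩ := hb δ hδ0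
  set D := 3 / 2 + β with hD
  have hD0 : 0 < D := by positivity
  refine ⟨max (C * 2 + |K| * (D * (2 / ε))) (M * (2 / δ ^ 2) + |K| * (1 / δ)),
    max (2 * u₀) ((2 * D / ε) ^ 2), by positivity,
    le_trans (by linarith) (le_max_left _ _), fun u hu v => ?_⟩
  have hu2 : 2 * u₀ ≤ u := (le_max_left _ _).trans hu
  have hu1 : 1 ≤ u := by linarith
  have hu0 : 0 < u := by linarith
  have hsu : 2 * D / ε ≤ √u := Real.le_sqrt_of_sq_le ((le_max_right _ _).trans hu)
  have hs1 : 1 ≤ √u := by rw [Real.one_le_sqrt]; exact hu1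
  have hs0 : 0 < √u := by linarith
  have hss : √u * √u = u := Real.mul_self_sqrt hu0.le
  have hg := jdg_pos β u
  have hav := abs_nonneg v
  rcases le_or_gt |v| (u / 2) with hv | hv
  · refine le_trans ?_ (mul_le_mul_of_nonneg_right (mul_le_mul_of_nonneg_right
      (le_max_left _ _) (by positivity)) (by positivity))
    have hv' := abs_le.mp hv
    set w := u - v with hw
    have hwu : u / 2 ≤ w := by linarith
    have hw0 : 0 < w := by linarith
    have hθ := jd_shift_exp hβ hu1 hw hv
    set θ := (-(3 / 4) * Real.log w + β * √w) - (-(3 / 4) * Real.log u + β * √u) with hθd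
    have hgw : jdg β w = jdg β u * Real.exp θ := by
      unfold jdg; rw [← Real.exp_add]; congr 1; rw [hθd]; ring
    have hθ2 : |θ| ≤ ε / 2 * |v| := by
      refine hθ.trans ?_
      rw [div_le_iff₀ hε] at hsu
      rw [mul_div_assoc', div_le_iff₀ hs0]
      nlinarith
    have hexp : Real.exp |θ| ≤ Real.exp (ε / 2 * |v|) := Real.exp_le_exp.mpr hθ2
    have hvexp : |v| ≤ 2 / ε * Real.exp (ε / 2 * |v|) := by
      have := Real.add_one_le_exp (ε / 2 * |v|)
      rw [div_mul_eq_mul_div, le_div_iff₀ hε]; linarith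
    have hee : Real.exp (ε / 2 * |v|) * Real.exp (ε / 2 * |v|) = Real.exp (ε * |v|) := by
      rw [← Real.exp_add]; congr 1; ring
    have hdiff : |jdg β w - jdg β u| ≤ D * (2 / ε) * (jdg β u / √u) * Real.exp (ε * |v|) := by
      rw [hgw, show jdg β u * Real.exp θ - jdg β u = jdg β u * (Real.exp θ - 1) by ring, abs_mul,
        abs_of_pos hg]
      calc _ ≤ jdg β u * (|θ| * Real.exp |θ|) := by gcongr; exact jd_exp_sub_one θ
        _ ≤ jdg β u * (D * ((2 / ε * Real.exp (ε / 2 * |v|)) / √u) * Real.exp (ε / 2 * |v|)) := by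
          gcongr
          refine hθ.trans ?_
          gcongr
        _ = D * (2 / ε) * (jdg β u / √u) * (Real.exp (ε / 2 * |v|) * Real.exp (ε / 2 * |v|)) := by
          ring
        _ = _ := by rw [hee]
    have hsw : √u / 2 ≤ √w := by
      apply Real.le_sqrt_of_sq_le
      rw [div_pow, Real.sq_sqrt hu0.le]; linarith
    have hmain : C * (jdg β w / √w) ≤ C * 2 * (jdg β u / √u) * Real.exp (ε * |v|) := by
      have h1 : jdg β w ≤ jdg β u * Real.exp (ε * |v|) := by
        rw [hgw]
        have : θ ≤ ε * |v| := by
          have := (le_abs_self θ).trans hθ2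
          nlinarith
        gcongr
      calc C * (jdg β w / √w) ≤ C * (jdg β u * Real.exp (ε * |v|) / (√u / 2)) := by gcongr
        _ = _ := by field_simp
    calc |Ψ w - K * jdg β u| = |(Ψ w - K * jdg β w) + K * (jdg β w - jdg β u)| := by
          congr 1; ring
      _ ≤ |Ψ w - K * jdg β w| + |K * (jdg β w - jdg β u)| := abs_add_le _ _
      _ ≤ C * 2 * (jdg β u / √u) * Real.exp (ε * |v|) +
          |K| * (D * (2 / ε) * (jdg β u / √u) * Real.exp (ε * |v|)) := by
          rw [abs_mul]
          gcongr
          exact (ha w (by linarith)).trans hmain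
      _ = _ := by ring
  · refine le_trans ?_ (mul_le_mul_of_nonneg_right (mul_le_mul_of_nonneg_right
      (le_max_right _ _) (by positivity)) (by positivity))
    have h1 : |Ψ (u - v)| ≤ M * Real.exp (3 * δ * |v|) := by
      refine (hb _).trans ?_
      have : |u - v| ≤ 3 * |v| := by
        have := abs_sub u v
        rw [abs_of_pos hu0] at this
        linarith
      have h3 : δ * |u - v| ≤ 3 * δ * |v| := by nlinarith
      gcongr
    have hδu : Real.exp (δ * u) ≤ Real.exp (2 * δ * |v|) := by
      apply Real.exp_le_exp.mpr; nlinarith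
    have h2 : √u ≤ 1 / δ * Real.exp (ε * |v|) := by
      have h3 := Real.add_one_le_exp (δ * u)
      have h4 : Real.exp (2 * δ * |v|) ≤ Real.exp (ε * |v|) := by
        apply Real.exp_le_exp.mpr; nlinarith
      have h5 : √u ≤ u := by nlinarith
      rw [div_mul_eq_mul_div, one_mul, le_div_iff₀ hδ0]
      nlinarith
    have h6 : 1 ≤ (2 / δ ^ 2) * (jdg β u / √u) * Real.exp (2 * δ * |v|) := by
      have h7 : 1 / u ≤ jdg β u := by
        unfold jdg
        rw [one_div, ← Real.exp_log (inv_pos.mpr hu0), Real.log_inv]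
        apply Real.exp_le_exp.mpr
        have := Real.log_nonneg hu1
        have : 0 ≤ β * √u := by positivity
        linarith
      have h8 := Real.pow_div_factorial_le_exp (δ * u) (by positivity) 2
      have h9 : u ^ 2 ≤ (2 / δ ^ 2) * Real.exp (2 * δ * |v|) := by
        have h10 := h8.trans hδu
        rw [mul_pow, show ((2:ℕ).factorial : ℝ) = 2 by norm_num, div_le_iff₀ (by norm_num)] at h10
        rw [div_mul_eq_mul_div, le_div_iff₀ (by positivity)]
        linarith
      have h5 : √u ≤ u := by nlinarith
      calc (1:ℝ) = (1 / u / u) * u ^ 2 := by field_simp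
        _ ≤ (jdg β u / √u) * ((2 / δ ^ 2) * Real.exp (2 * δ * |v|)) := by gcongr
        _ = _ := by ring
    have hA : |Ψ (u - v)| ≤ M * (2 / δ ^ 2) * (jdg β u / √u) * Real.exp (ε * |v|) := by
      calc _ ≤ M * Real.exp (3 * δ * |v|) := h1
        _ = M * Real.exp (3 * δ * |v|) * 1 := by ring
        _ ≤ M * Real.exp (3 * δ * |v|) *
            ((2 / δ ^ 2) * (jdg β u / √u) * Real.exp (2 * δ * |v|)) := by gcongr
        _ = M * (2 / δ ^ 2) * (jdg β u / √u) * Real.exp (5 * δ * |v|) := by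
            rw [show 5 * δ * |v| = 3 * δ * |v| + 2 * δ * |v| by ring, Real.exp_add]; ring
        _ ≤ _ := by
            have : 5 * δ * |v| ≤ ε * |v| := by nlinarith
            gcongr
    have hB : |K * jdg β u| ≤ |K| * (1 / δ) * (jdg β u / √u) * Real.exp (ε * |v|) := by
      rw [abs_mul, abs_of_pos hg]
      calc |K| * jdg β u = |K| * (jdg β u / √u) * √u := by field_simp
        _ ≤ |K| * (jdg β u / √u) * (1 / δ * Real.exp (ε * |v|)) := by gcongr
        _ = _ := by ring
    calc _ ≤ |Ψ (u - v)| + |K * jdg β u| := abs_sub _ _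
      _ ≤ _ := add_le_add hA hB
      _ = _ := by ring

/-! ### Part 5: the jump kernel and the moments of `U` -/

lemma jd_bCoef (lam t η₁ η₂ p q : ℝ) (k : ℕ) :
    bCoef lam t η₁ η₂ p q k = aCoef lam t η₂ η₁ q p k := by
  unfold bCoef aCoef
  congr 2
  ext m
  congr 1
  unfold Qcoef Pcoef
  split_ifs
  · rfl
  · refine Finset.sum_congr rfl fun i _ => ?_
    rw [add_comm η₂ η₁]; ring

lemma jd_G2m (lam t η₁ η₂ p q u : ℝ) : G2m lam t η₁ η₂ p q u = G1 lam t η₂ η₁ q p u := by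
  unfold G2m G1
  simp_rw [jd_bCoef]

/-- The logarithmic kernel. -/
noncomputable def jdPsi (lam t η₁ η₂ p q : ℝ) (w : ℝ) : ℝ :=
  if 0 < w then G1 lam t η₁ η₂ p q w
  else Real.exp ((η₁ + η₂) * w) * G1 lam t η₂ η₁ q p (-w)

lemma jd_Hfun (lam t η₁ η₂ p q : ℝ) {z : ℝ} (hz : 0 < z) :
    Hfun lam t η₁ η₂ p q z = z ^ (-η₁ - 1) * jdPsi lam t η₁ η₂ p q (Real.log z) := by
  unfold Hfun jdPsi H1fun H2fun
  simp only [Real.log_pos_iff hz.le]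
  split_ifs with h
  · ring
  · rw [jd_G2m, Real.log_inv, mul_comm (η₁ + η₂), ← Real.rpow_def_of_pos hz, ← mul_assoc,
      ← Real.rpow_add hz]
    rw [show -η₁ - 1 + (η₁ + η₂) = η₂ - 1 by ring]; ring

lemma jd_Psi_meas (lam t η₁ η₂ p q : ℝ) (hL : 0 ≤ lam * t) (hη₁ : 0 < η₁) (hη₂ : 0 < η₂)
    (hp : 0 ≤ p) (hq : 0 ≤ q) (hpq : p + q = 1) : Measurable (jdPsi lam t η₁ η₂ p q) := by
  unfold jdPsi
  have h1 := jd_G1_meas lam t η₁ η₂ p q hL hη₁ hη₂ hp hq hpq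
  have h2 := jd_G1_meas lam t η₂ η₁ q p hL hη₂ hη₁ hq hp (by linarith)
  refine Measurable.ite measurableSet_Ioi h1 ?_
  exact Measurable.mul (by fun_prop) (h2.comp measurable_neg)

lemma jd_Psi_growth (lam t η₁ η₂ p q : ℝ) (hL : 0 ≤ lam * t) (hη₁ : 0 < η₁) (hη₂ : 0 < η₂)
    (hp : 0 ≤ p) (hq : 0 ≤ q) (hpq : p + q = 1) (δ : ℝ) (hδ : 0 < δ) :
    ∃ M : ℝ, 0 ≤ M ∧ ∀ w, |jdPsi lam t η₁ η₂ p q w| ≤ M * Real.exp (δ * |w|) := by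
  obtain ⟨M1, hM1, h1⟩ := jd_G1_growth lam t η₁ η₂ p q hL hη₁ hη₂ hp hq hpq δ hδ
  obtain ⟨M2, hM2, h2⟩ := jd_G1_growth lam t η₂ η₁ q p hL hη₂ hη₁ hq hp (by linarith) δ hδ
  refine ⟨M1 + M2, by positivity, fun w => ?_⟩
  have hE := Real.exp_pos (δ * |w|)
  unfold jdPsi
  split_ifs with hw
  · have := h1 w hw.le
    rw [abs_of_pos hw] at *
    nlinarith
  · push Not at hw
    have h3 := h2 (-w) (by linarith)
    rw [abs_mul, abs_of_pos (Real.exp_pos _), abs_of_nonpos hw] at *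
    have h4 : Real.exp ((η₁ + η₂) * w) ≤ 1 := Real.exp_le_one_iff.mpr
      (mul_nonpos_of_nonneg_of_nonpos (by positivity) hw)
    calc _ ≤ 1 * |G1 lam t η₂ η₁ q p (-w)| := by gcongr
      _ ≤ (M1 + M2) * Real.exp (δ * -w) := by nlinarith

lemma jd_mellin (f : ℝ → ℝ) (H : ℝ → ℝ) {x : ℝ} (hx : 0 < x) :
    mellinConv f H x = ∫ y in Set.Ioi (0:ℝ), f y * H (x / y) / y := by
  unfold mellinConv
  rw [← integral_comp_rpow_Ioi _ (show (-1:ℝ) ≠ 0 by norm_num)]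
  have h := integral_comp_mul_left_Ioi (fun y => f y * H (x / y) / y) 0 hx
  rw [mul_zero, smul_eq_mul] at h
  have h2 : (∫ y in Set.Ioi (0:ℝ), f y * H (x / y) / y) =
      ∫ y in Set.Ioi (0:ℝ), x * (f (x * y) * H (x / (x * y)) / (x * y)) := by
    rw [integral_const_mul, h]; field_simp
  rw [h2]
  refine setIntegral_congr_fun measurableSet_Ioi fun y hy => ?_
  have hy0 : 0 < y := hy
  simp only [smul_eq_mul]
  rw [show (-1 - 1 : ℝ) = -2 by norm_num, Real.rpow_neg hy0.le, Real.rpow_neg_one,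
    show (y:ℝ) ^ (2:ℝ) = y ^ 2 by norm_cast, div_inv_eq_mul,
    show x / (x * y) = y⁻¹ by field_simp]
  norm_num
  field_simp

lemma jd_kernel (lam t η₁ η₂ p q : ℝ) (U : ℝ → ℝ) {x : ℝ} (hx : 0 < x) :
    mellinConv U (Hfun lam t η₁ η₂ p q) x = x ^ (-η₁ - 1) *
      ∫ y in Set.Ioi (0:ℝ), y ^ η₁ * U y *
        jdPsi lam t η₁ η₂ p q (Real.log x - Real.log y) := by
  rw [jd_mellin _ _ hx, ← integral_const_mul]
  refine setIntegral_congr_fun measurableSet_Ioi fun y hy => ?_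
  have hy0 : 0 < y := hy
  rw [jd_Hfun _ _ _ _ _ _ (div_pos hx hy0), Real.log_div hx.ne' hy0.ne',
    Real.div_rpow hx.le hy0.le, show -η₁ - 1 = -(η₁ + 1) by ring, Real.rpow_neg hy0.le,
    Real.rpow_add_one hy0.ne']
  field_simp

lemma jd_U_bigO (U : ℝ → ℝ) (B₁ A₂ A₃ κ ε : ℝ) (hε : 0 < ε)
    (hU_infty : (fun x => U x -
        B₁ * x ^ (-A₃) * Real.exp (A₂ * Real.sqrt (Real.log x)) * (Real.log x) ^ κ)
      =O[atTop] (fun x =>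
        B₁ * x ^ (-A₃) * Real.exp (A₂ * Real.sqrt (Real.log x)) * (Real.log x) ^ κ *
          (Real.log x) ^ (-(1:ℝ)/2))) :
    U =O[atTop] (fun x : ℝ => x ^ (-A₃ + ε)) := by
  set F : ℝ → ℝ := fun x =>
    B₁ * x ^ (-A₃) * Real.exp (A₂ * Real.sqrt (Real.log x)) * (Real.log x) ^ κ with hF
  have h1 : (fun x => F x * (Real.log x) ^ (-(1:ℝ)/2)) =O[atTop] F := by
    refine IsBigO.of_bound 1 ?_
    filter_upwards [eventually_ge_atTop (Real.exp 1)] with x hx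
    have hl : 1 ≤ Real.log x := by
      rw [Real.le_log_iff_exp_le ((Real.exp_pos 1).trans_le hx)]; exact hx
    rw [norm_mul, one_mul]
    refine mul_le_of_le_one_right (norm_nonneg _) ?_
    rw [Real.norm_eq_abs, abs_of_nonneg (Real.rpow_nonneg (by linarith) _)]
    exact Real.rpow_le_one_of_one_le_of_nonpos hl (by norm_num)
  have h2 : U =O[atTop] F := by
    have := (hU_infty.trans h1).add (isBigO_refl F atTop)
    simpa [hF] using this
  refine h2.trans ?_
  have hB : (fun x : ℝ => B₁ * x ^ (-A₃)) =O[atTop] (fun x : ℝ => x ^ (-A₃)) :=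
    isBigO_const_mul_self _ _ _
  have hE : (fun x : ℝ => Real.exp (A₂ * Real.sqrt (Real.log x))) =O[atTop]
      (fun x : ℝ => x ^ (ε / 2)) := by
    refine IsBigO.of_bound (Real.exp (A₂ ^ 2 / (2 * ε))) ?_
    filter_upwards [eventually_ge_atTop 1] with x hx
    have hx0 : 0 < x := by linarith
    have hl := Real.log_nonneg hx
    rw [Real.norm_eq_abs, Real.norm_eq_abs, abs_of_pos (Real.exp_pos _),
      abs_of_pos (Real.rpow_pos_of_pos hx0 _), Real.rpow_def_of_pos hx0, ← Real.exp_add]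
    apply Real.exp_le_exp.mpr
    have hs := Real.sq_sqrt hl
    have : A₂ ^ 2 / (2 * ε) + Real.log x * (ε / 2) - A₂ * √(Real.log x) =
        (A₂ - ε * √(Real.log x)) ^ 2 / (2 * ε) := by
      field_simp
      linear_combination (-ε ^ 2) * hs
    have : 0 ≤ (A₂ - ε * √(Real.log x)) ^ 2 / (2 * ε) := by positivity
    linarith
  have hK := (isLittleO_log_rpow_rpow_atTop κ (show 0 < ε / 2 by positivity)).isBigO
  refine ((hB.mul hE).mul hK).congr' (EventuallyEq.refl _ _) ?_
  filter_upwards [eventually_gt_atTop 0] with x hx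
  rw [← Real.rpow_add hx, ← Real.rpow_add hx]
  congr 1; ring

lemma jd_moment (U : ℝ → ℝ) (hU_meas : Measurable U)
    (hUint : IntegrableOn U (Set.Ioi 0)) (a s : ℝ) (hs : 0 ≤ s) (has : s + a < -1)
    (hO : U =O[atTop] (fun x : ℝ => x ^ a)) :
    IntegrableOn (fun x => x ^ s * U x) (Set.Ioi 0) := by
  obtain ⟨C, hC⟩ := hO.bound
  obtain ⟨x0, hx0⟩ := eventually_atTop.mp hC
  set R := max x0 1 with hR
  have hR1 : 1 ≤ R := le_max_right _ _
  have hR0 : 0 < R := by linarith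
  rw [← Set.Ioc_union_Ioi_eq_Ioi hR0.le]
  have hm : Measurable (fun x => x ^ s * U x) := by fun_prop
  refine IntegrableOn.union ?_ ?_
  · have h1 : IntegrableOn (fun x => R ^ s * ‖U x‖) (Set.Ioc 0 R) :=
      (IntegrableOn.mono_set hUint.norm Set.Ioc_subset_Ioi_self).const_mul _
    refine Integrable.mono' h1 hm.aestronglyMeasurable ?_
    refine (ae_restrict_iff' measurableSet_Ioc).mpr (Eventually.of_forall fun v hv => ?_)
    rw [norm_mul, Real.norm_eq_abs, abs_of_nonneg (Real.rpow_nonneg hv.1.le _)]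
    exact mul_le_mul_of_nonneg_right (Real.rpow_le_rpow hv.1.le hv.2 hs) (norm_nonneg _)
  · have h1 : IntegrableOn (fun x : ℝ => C * x ^ (s + a)) (Set.Ioi R) :=
      (integrableOn_Ioi_rpow_of_lt has hR0).const_mul _
    refine Integrable.mono' h1 hm.aestronglyMeasurable ?_
    refine (ae_restrict_iff' measurableSet_Ioi).mpr (Eventually.of_forall fun v hv => ?_)
    have hv' : R < v := hv
    have hv0 : 0 < v := by linarith
    have h2 := hx0 v ((le_max_left _ _).trans hv'.le)
    rw [Real.norm_eq_abs (v ^ a), abs_of_nonneg (Real.rpow_nonneg hv0.le _)] at h2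
    rw [norm_mul, Real.norm_eq_abs, abs_of_nonneg (Real.rpow_nonneg hv0.le _),
      Real.rpow_add hv0]
    have := mul_le_mul_of_nonneg_left h2 (Real.rpow_nonneg hv0.le s)
    linarith

lemma jd_lower {β u δ : ℝ} (hβ : 0 ≤ β) (hu1 : 1 ≤ u) (hδ : 0 < δ) :
    Real.exp (-(δ * u)) ≤ (2 / δ ^ 2) * (jdg β u / √u) := by
  have hu0 : 0 < u := by linarith
  have hg := jdg_pos β u
  have h7 : 1 / u ≤ jdg β u := by
    unfold jdg
    rw [one_div, ← Real.exp_log (inv_pos.mpr hu0), Real.log_inv]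
    apply Real.exp_le_exp.mpr
    have := Real.log_nonneg hu1
    have : 0 ≤ β * √u := by positivity
    linarith
  have h8 := Real.pow_div_factorial_le_exp (δ * u) (by positivity) 2
  have h9 : u ^ 2 ≤ (2 / δ ^ 2) * Real.exp (δ * u) := by
    rw [mul_pow, show ((2:ℕ).factorial : ℝ) = 2 by norm_num, div_le_iff₀ (by norm_num)] at h8
    rw [div_mul_eq_mul_div, le_div_iff₀ (by positivity)]
    linarith
  have hs1 : 1 ≤ √u := by rw [Real.one_le_sqrt]; exact hu1
  have hss : √u * √u = u := Real.mul_self_sqrt hu0.le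
  have h5 : √u ≤ u := by nlinarith
  have h6 : 1 ≤ (2 / δ ^ 2) * (jdg β u / √u) * Real.exp (δ * u) := by
    calc (1:ℝ) = (1 / u / u) * u ^ 2 := by field_simp
      _ ≤ (jdg β u / √u) * ((2 / δ ^ 2) * Real.exp (δ * u)) := by gcongr
      _ = _ := by ring
  rw [Real.exp_neg, inv_le_iff_one_le_mul₀ (Real.exp_pos _)]
  exact h6

/-- Theorem: density asymptotics at infinity when the jump part
dominates, `A₃ > 1 + η₁`.  Let `U` be a probability density on `(0,∞)` with the
Heston-type asymptotics at infinity and zero, and let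
`D(x) = e^{−λt} U(x) + (U ⋆_M H(t,·))(x)`.  Then the moment `m_{η₁}(U)` is finite and
`D(x) = (1/(2√π)) m_{η₁}(U) (η₁λtp)^{1/4} exp{η₂λtq/(η₁+η₂) − λt} (log x)^{−3/4}`
`· exp{2√(η₁λtp) √(log x)} x^{−η₁−1} (1 + O((log x)^{−1/2}))` as `x → ∞`. -/
theorem density_asymptotics_jump_dominates_at_infinity
    (t lam η₁ η₂ p q : ℝ) (U : ℝ → ℝ) (B₁ Bt₁ A₂ At₂ A₃ At₃ κ : ℝ)
    (ht : 0 < t) (hlam : 0 < lam) (hη₁ : 1 < η₁) (hη₂ : 0 < η₂)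
    (hp : 0 < p) (hq : 0 < q) (hpq : p + q = 1)
    (hB₁ : 0 < B₁) (hBt₁ : 0 < Bt₁) (hAt₃ : -1 < At₃) (hA₃ : 1 + η₁ < A₃)
    (hU_meas : Measurable U) (hU_nonneg : ∀ x, 0 ≤ U x)
    (hU_prob : (∫ x in Set.Ioi (0:ℝ), U x) = 1)
    -- `U(x) = B₁ x^{−A₃} exp{A₂√(log x)} (log x)^κ (1 + O((log x)^{−1/2}))` as `x → ∞`
    (hU_infty : (fun x => U x -
        B₁ * x ^ (-A₃) * Real.exp (A₂ * Real.sqrt (Real.log x)) * (Real.log x) ^ κ)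
      =O[atTop] (fun x =>
        B₁ * x ^ (-A₃) * Real.exp (A₂ * Real.sqrt (Real.log x)) * (Real.log x) ^ κ *
          (Real.log x) ^ (-(1:ℝ)/2)))
    -- `U(x) = B̃₁ x^{Ã₃} exp{Ã₂√(log(1/x))} (log(1/x))^κ (1 + O((log(1/x))^{−1/2}))` as `x → 0`
    (hU_zero : (fun x => U x -
        Bt₁ * x ^ At₃ * Real.exp (At₂ * Real.sqrt (Real.log x⁻¹)) * (Real.log x⁻¹) ^ κ)
      =O[nhdsWithin 0 (Set.Ioi 0)] (fun x =>
        Bt₁ * x ^ At₃ * Real.exp (At₂ * Real.sqrt (Real.log x⁻¹)) * (Real.log x⁻¹) ^ κ *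
          (Real.log x⁻¹) ^ (-(1:ℝ)/2))) :
    MeasureTheory.IntegrableOn (fun x => x ^ η₁ * U x) (Set.Ioi 0) ∧
    (fun x => (Real.exp (-(lam * t)) * U x +
        mellinConv U (Hfun lam t η₁ η₂ p q) x) -
        1 / (2 * Real.sqrt Real.pi) * (∫ y in Set.Ioi (0:ℝ), y ^ η₁ * U y) *
          (η₁ * lam * t * p) ^ ((1:ℝ)/4) *
          Real.exp (η₂ * lam * t * q / (η₁ + η₂) - lam * t) *
          (Real.log x) ^ (-(3:ℝ)/4) *
          Real.exp (2 * Real.sqrt (η₁ * lam * t * p) * Real.sqrt (Real.log x)) *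
          x ^ (-η₁ - 1))
      =O[atTop]
      (fun x =>
        1 / (2 * Real.sqrt Real.pi) * (∫ y in Set.Ioi (0:ℝ), y ^ η₁ * U y) *
          (η₁ * lam * t * p) ^ ((1:ℝ)/4) *
          Real.exp (η₂ * lam * t * q / (η₁ + η₂) - lam * t) *
          (Real.log x) ^ (-(3:ℝ)/4) *
          Real.exp (2 * Real.sqrt (η₁ * lam * t * p) * Real.sqrt (Real.log x)) *
          x ^ (-η₁ - 1) * (Real.log x) ^ (-(1:ℝ)/2)) := by
  have hL : 0 < lam * t := by positivity
  have hη₁0 : 0 < η₁ := by linarith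
  set d := A₃ - 1 - η₁ with hd
  have hd0 : 0 < d := by rw [hd]; linarith
  set ε := min (d / 4) 1 with hεd
  have hε : 0 < ε := lt_min (by linarith) one_pos
  have hε1 : ε ≤ 1 := min_le_right _ _
  have hεd4 : ε ≤ d / 4 := min_le_left _ _
  have hO := jd_U_bigO U B₁ A₂ A₃ κ ε hε hU_infty
  have hUint : IntegrableOn U (Set.Ioi 0) := by
    by_contra hcon
    rw [integral_undef hcon] at hU_prob
    norm_num at hU_prob
  have hm0 := jd_moment U hU_meas hUint (-A₃ + ε) η₁ (by linarith) (by linarith) hO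
  have hm1 := jd_moment U hU_meas hUint (-A₃ + ε) (η₁ + ε) (by linarith) (by linarith) hO
  have hm2 := jd_moment U hU_meas hUint (-A₃ + ε) (η₁ - ε) (by linarith) (by linarith) hO
  refine ⟨hm0, ?_⟩
  set m := ∫ y in Set.Ioi (0:ℝ), y ^ η₁ * U y with hm
  have hmpos : 0 < m := by
    have hnn : 0 ≤ᵐ[volume.restrict (Set.Ioi (0:ℝ))] fun y => y ^ η₁ * U y :=
      (ae_restrict_iff' measurableSet_Ioi).mpr (Eventually.of_forall fun y hy =>
        mul_nonneg (Real.rpow_nonneg (le_of_lt hy) _) (hU_nonneg y))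
    refine lt_of_le_of_ne (integral_nonneg_of_ae hnn) fun h0 => ?_
    rw [hm, eq_comm, integral_eq_zero_iff_of_nonneg_ae hnn hm0] at h0
    have : (∫ x in Set.Ioi (0:ℝ), U x) = 0 := by
      rw [integral_eq_zero_iff_of_nonneg (fun y => hU_nonneg y) hUint]
      filter_upwards [h0, ae_restrict_mem measurableSet_Ioi] with y hy hy0
      exact (mul_eq_zero.mp hy).resolve_left (Real.rpow_pos_of_pos hy0 _).ne'
    rw [this] at hU_prob
    norm_num at hU_prob
  have hc : 0 < η₁ * lam * t * p := by positivity
  obtain ⟨Ca, ua, hCa, hua, hasy⟩ := jd_G1_asymp lam t η₁ η₂ p q hL hη₁0 hη₂ hp hq.le hpq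
  set c := η₁ * lam * t * p with hcdef
  set E := Real.exp (η₂ * lam * t * q / (η₁ + η₂) - lam * t) with hE
  have hE0 : 0 < E := Real.exp_pos _
  set K := 1 / (2 * √Real.pi) * c ^ ((1:ℝ) / 4) * E with hK
  have hK0 : 0 < K := by have := Real.pi_pos; positivity
  set Ψ := jdPsi lam t η₁ η₂ p q with hΨ
  have hβ : 0 ≤ 2 * √c := by positivity
  obtain ⟨Cs, us, hCs, hus, hshift⟩ := jd_shift Ψ (2 * √c) K hβ
    ⟨Ca, ua, hCa, hua, fun w hw => by
      have hw0 : 0 < w := by linarith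
      rw [hΨ, jdPsi, if_pos hw0]
      exact hasy w hw⟩
    (jd_Psi_growth lam t η₁ η₂ p q hL.le hη₁0 hη₂ hp.le hq.le hpq) ε hε
  have hΨm : Measurable Ψ := jd_Psi_meas lam t η₁ η₂ p q hL.le hη₁0 hη₂ hp.le hq.le hpq
  set J := ∫ y in Set.Ioi (0:ℝ), (y ^ (η₁ + ε) * U y + y ^ (η₁ - ε) * U y) with hJ
  have hJi : IntegrableOn (fun y => y ^ (η₁ + ε) * U y + y ^ (η₁ - ε) * U y) (Set.Ioi 0) :=
    hm1.add hm2
  obtain ⟨CU, hCU⟩ := hO.bound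
  -- the main estimate for the convolution
  have hconv : ∀ x : ℝ, 0 < x → us ≤ Real.log x →
      |mellinConv U (Hfun lam t η₁ η₂ p q) x -
        x ^ (-η₁ - 1) * (m * (K * jdg (2 * √c) (Real.log x)))| ≤
      x ^ (-η₁ - 1) * (Cs * (jdg (2 * √c) (Real.log x) / √(Real.log x)) * J) := by
    intro x hx hux
    rw [jd_kernel _ _ _ _ _ _ _ hx, ← mul_sub, abs_mul,
      abs_of_pos (Real.rpow_pos_of_pos hx _)]
    refine mul_le_mul_of_nonneg_left ?_ (Real.rpow_pos_of_pos hx _).le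
    set u := Real.log x with hu
    set g := jdg (2 * √c) u with hg
    have hbd : ∀ᵐ y ∂(volume.restrict (Set.Ioi (0:ℝ))),
        ‖y ^ η₁ * U y * Ψ (u - Real.log y) - y ^ η₁ * U y * (K * g)‖ ≤
          Cs * (g / √u) * (y ^ (η₁ + ε) * U y + y ^ (η₁ - ε) * U y) := by
      refine (ae_restrict_iff' measurableSet_Ioi).mpr (Eventually.of_forall fun y hy => ?_)
      have hy0 : 0 < y := hy
      have hg0 : 0 < g := jdg_pos _ _
      have hyU : 0 ≤ y ^ η₁ * U y := mul_nonneg (Real.rpow_nonneg hy0.le _) (hU_nonneg y)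
      rw [← mul_sub, norm_mul, Real.norm_eq_abs, abs_of_nonneg hyU, Real.norm_eq_abs]
      have h1 := hshift u hux (Real.log y)
      have h2 : Real.exp (ε * |Real.log y|) ≤ y ^ ε + y ^ (-ε) := by
        have hp1 := Real.rpow_pos_of_pos hy0 ε
        have hp2 := Real.rpow_pos_of_pos hy0 (-ε)
        rcases abs_cases (Real.log y) with ⟨h, _⟩ | ⟨h, _⟩
        · rw [h, mul_comm, ← Real.rpow_def_of_pos hy0]; linarith
        · rw [h, show ε * -Real.log y = Real.log y * (-ε) by ring, ← Real.rpow_def_of_pos hy0]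
          linarith
      calc _ ≤ y ^ η₁ * U y * (Cs * (g / √u) * (y ^ ε + y ^ (-ε))) := by
            refine mul_le_mul_of_nonneg_left (h1.trans ?_) hyU
            exact mul_le_mul_of_nonneg_left h2 (by positivity)
        _ = _ := by
            rw [Real.rpow_add hy0, sub_eq_add_neg, Real.rpow_add hy0]; ring
    have hm0' : IntegrableOn (fun y => y ^ η₁ * U y * (K * g)) (Set.Ioi 0) := hm0.mul_const _
    have hdint : IntegrableOn (fun y => y ^ η₁ * U y * Ψ (u - Real.log y) -
        y ^ η₁ * U y * (K * g)) (Set.Ioi 0) := by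
      refine Integrable.mono' (hJi.const_mul (Cs * (g / √u))) ?_ hbd
      refine Measurable.aestronglyMeasurable ?_
      have hc1 : Measurable (fun y => Ψ (u - Real.log y)) := hΨm.comp (by fun_prop)
      fun_prop
    have hUint2 : IntegrableOn (fun y => y ^ η₁ * U y * Ψ (u - Real.log y)) (Set.Ioi 0) := by
      have := hdint.add hm0'
      refine this.congr (Eventually.of_forall fun y => ?_)
      simp
    rw [hm, ← integral_mul_const, ← integral_sub hUint2 hm0', hJ, ← integral_const_mul,
      ← Real.norm_eq_abs]
    exact norm_integral_le_of_norm_le (hJi.const_mul _) hbd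
  set δ := d - ε with hδ
  have hδ0 : 0 < δ := by linarith
  have hJ0 : 0 ≤ J := by
    refine setIntegral_nonneg measurableSet_Ioi fun y hy => ?_
    have hy0 : 0 < y := hy
    have := hU_nonneg y
    positivity
  refine IsBigO.of_bound ((Real.exp (-(lam * t)) * (|CU| * (2 / δ ^ 2)) + Cs * J) / (m * K)) ?_
  filter_upwards [hCU, Real.tendsto_log_atTop.eventually (eventually_ge_atTop us),
    eventually_gt_atTop 0] with x hxU hux hx
  have hcx := hconv x hx hux
  set u := Real.log x with hu
  have hu1 : 1 ≤ u := hus.trans hux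
  have hu0 : 0 < u := by linarith
  have hge := jdg_eq (2 * √c) hu0
  have hg0 := jdg_pos (2 * √c) u
  set g := jdg (2 * √c) u with hg
  have hxp : 0 < x ^ (-η₁ - 1) := Real.rpow_pos_of_pos hx _
  have hmain : 1 / (2 * √Real.pi) * m * c ^ ((1:ℝ) / 4) * E * u ^ (-(3:ℝ) / 4) *
      Real.exp (2 * √c * √u) * x ^ (-η₁ - 1) = x ^ (-η₁ - 1) * (m * (K * g)) := by
    rw [hge, hK]; ring
  have hhalf : u ^ (-(1:ℝ) / 2) = 1 / √u := by
    rw [neg_div, Real.rpow_neg hu0.le, Real.sqrt_eq_rpow]; exact (one_div _).symm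
  rw [hmain, hhalf, Real.norm_eq_abs, Real.norm_eq_abs]
  have hrhs : |x ^ (-η₁ - 1) * (m * (K * g)) * (1 / √u)| =
      (m * K) * (x ^ (-η₁ - 1) * (g / √u)) := by
    rw [abs_of_nonneg (by positivity)]; ring
  rw [hrhs, ← mul_assoc (_ / (m * K)), div_mul_cancel₀ _ (by positivity)]
  have hUx : U x ≤ |CU| * (2 / δ ^ 2) * (x ^ (-η₁ - 1) * (g / √u)) := by
    have h1 : U x ≤ |CU| * x ^ (-A₃ + ε) := by
      rw [Real.norm_eq_abs, Real.norm_eq_abs, abs_of_pos (Real.rpow_pos_of_pos hx _)] at hxU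
      have := Real.rpow_pos_of_pos hx (-A₃ + ε)
      nlinarith [le_abs_self (U x), le_abs_self CU]
    have h2 : x ^ (-A₃ + ε) = x ^ (-η₁ - 1) * Real.exp (-(δ * u)) := by
      rw [show -A₃ + ε = (-η₁ - 1) + -δ by rw [hδ, hd]; ring, Real.rpow_add hx,
        Real.rpow_def_of_pos hx (-δ)]
      congr 2; rw [← hu]; ring
    have h3 := jd_lower hβ hu1 hδ0
    calc _ ≤ _ := h1
      _ = |CU| * (x ^ (-η₁ - 1) * Real.exp (-(δ * u))) := by rw [h2]
      _ ≤ |CU| * (x ^ (-η₁ - 1) * ((2 / δ ^ 2) * (g / √u))) := by gcongr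
      _ = _ := by ring
  have hU0 := hU_nonneg x
  have hEL := Real.exp_pos (-(lam * t))
  calc _ = |Real.exp (-(lam * t)) * U x + (mellinConv U (Hfun lam t η₁ η₂ p q) x -
        x ^ (-η₁ - 1) * (m * (K * g)))| := by congr 1; ring
    _ ≤ |Real.exp (-(lam * t)) * U x| + |mellinConv U (Hfun lam t η₁ η₂ p q) x -
        x ^ (-η₁ - 1) * (m * (K * g))| := abs_add_le _ _
    _ ≤ Real.exp (-(lam * t)) * (|CU| * (2 / δ ^ 2) * (x ^ (-η₁ - 1) * (g / √u))) +
        x ^ (-η₁ - 1) * (Cs * (g / √u) * J) := by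
        refine add_le_add ?_ hcx
        rw [abs_of_nonneg (by positivity)]
        gcongr
    _ = _ := by ring
end

section
/- Let t > 0, λ > 0, η₁ > 1, η₂ > 0, p, q > 0 with p + q = 1, and let U be a probability density on (0,∞) such that U(x) = B₁·x^{−A₃}·exp{A₂·√(log x)}·(log x)^{κ}·(1 + O((log x)^{−1/2})) as x → ∞ and U(x) = B̃₁·x^{Ã₃}·exp{Ã₂·√(log(1/x))}·(log(1/x))^{κ}·(1 + O((log(1/x))^{−1/2})) as x → 0, where B₁, B̃₁ > 0, A₂, Ã₂ ∈ ℝ, κ ∈ ℝ, A₃ > 2, and Ã₃ > η₂ − 1. Define D(x) = e^{−λt}·U(x) + (U ⋆_M H(t,·))(x) for x > 0. Then D(x) = (1/(2√π))·m_{−η₂}(U)·(η₂λtq)^{1/4}·exp{η₁λtp/(η₁+η₂) − λt}·(log(1/x))^{−3/4}·exp{2√(η₂λtq)·√(log(1/x))}·x^{η₂−1}·(1 + O((log(1/x))^{−1/2})) as x → 0, where m_{−η₂}(U) = ∫_0^∞ x^{−η₂} U(x) dx < ∞. -/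
open Filter Asymptotics MeasureTheory

noncomputable def Sf (x : ℝ) : ℝ := ∑' k : ℕ, x ^ k / ((k.factorial : ℝ) * ((k+1).factorial : ℝ))
noncomputable def Rf (x : ℝ) : ℝ := ∑' k : ℕ, x ^ k / ((k.factorial : ℝ) * ((k+2).factorial : ℝ))

lemma summable_aux (j : ℕ) (x : ℝ) :
    Summable (fun k : ℕ => x ^ k / ((k.factorial : ℝ) * ((k+j).factorial : ℝ))) := by
  refine Summable.of_norm_bounded (Real.summable_pow_div_factorial |x|) ?_
  intro k
  rw [Real.norm_eq_abs, abs_div, abs_pow]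
  have h1 : (1:ℝ) ≤ ((k+j).factorial : ℝ) := by exact_mod_cast Nat.one_le_iff_ne_zero.2 (Nat.factorial_ne_zero _)
  have h2 : (0:ℝ) < (k.factorial : ℝ) := by positivity
  rw [abs_of_pos (mul_pos h2 (by linarith))]
  exact div_le_div_of_nonneg_left (by positivity) h2 (by nlinarith)

lemma Rf_le (x : ℝ) (hx : 0 < x) : Rf x ≤ Sf x / Real.sqrt x := by
  have hS := summable_aux 1 x
  have hR := summable_aux 2 x
  have hS' : Summable (fun k : ℕ => x ^ (k+1) / (((k+1).factorial : ℝ) * ((k+1+1).factorial : ℝ))) :=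
    (summable_nat_add_iff 1).2 hS
  have hsq : 0 < Real.sqrt x := Real.sqrt_pos.2 hx
  have hxx : Real.sqrt x * Real.sqrt x = x := Real.mul_self_sqrt hx.le
  have h1 : ∑' k : ℕ, x ^ (k+1) / (((k+1).factorial : ℝ) * ((k+1+1).factorial : ℝ)) ≤ Sf x := by
    unfold Sf
    rw [hS.tsum_eq_zero_add]
    have : 0 ≤ x ^ 0 / (((Nat.factorial 0 : ℕ) : ℝ) * ((Nat.factorial (0+1) : ℕ) : ℝ)) := by positivity
    linarith
  have key : ∀ k : ℕ, x ^ k / ((k.factorial : ℝ) * ((k+2).factorial : ℝ)) ≤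
      (1/2) * ((1 / Real.sqrt x) * (x ^ k / ((k.factorial : ℝ) * ((k+1).factorial : ℝ))) +
       (1 / Real.sqrt x) * (x ^ (k+1) / (((k+1).factorial : ℝ) * ((k+1+1).factorial : ℝ)))) := by
    intro k
    have hk : (0:ℝ) < (k.factorial : ℝ) := by positivity
    have e1 : ((k+1).factorial : ℝ) = (k+1) * k.factorial := by
      rw [Nat.factorial_succ]; push_cast; ring
    have e2 : ((k+2).factorial : ℝ) = (k+2) * ((k+1) * k.factorial) := by
      rw [Nat.factorial_succ]; push_cast; rw [e1]; ring
    rw [show k+1+1 = k+2 from rfl, e2, e1, pow_succ]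
    set s := Real.sqrt x
    have hk0 : (0:ℝ) ≤ k := Nat.cast_nonneg k
    have : 1/((k:ℝ)+2) ≤ (1/2) * (1/s + s/((k+1)*(k+2))) := by
      rw [div_add_div _ _ hsq.ne' (by positivity), ← mul_div_assoc, div_le_div_iff₀ (by positivity) (by positivity)]
      nlinarith [mul_nonneg hk0 hsq.le, sq_nonneg (s - (k+1)), sq_nonneg s, mul_nonneg hk0 (sq_nonneg (s-(k+1))), sq_nonneg (s - (k+2)), mul_nonneg hk0 (sq_nonneg (s-(k+2)))]
    calc _ = (x^k / (k.factorial * ((k+1) * k.factorial))) * (1/((k:ℝ)+2)) := by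
            field_simp
      _ ≤ (x^k / (k.factorial * ((k+1) * k.factorial))) * ((1/2) * (1/s + s/((k+1)*(k+2)))) := by
            gcongr
      _ = _ := by
            have hs2 : s ^ 2 = x := by rw [← hxx]; ring
            have : x ^ k * x = x ^ k * s ^ 2 := by rw [hs2]
            rw [this]
            field_simp
  calc Rf x ≤ ∑' k : ℕ, (1/2) * ((1 / Real.sqrt x) * (x ^ k / ((k.factorial : ℝ) * ((k+1).factorial : ℝ))) +
       (1 / Real.sqrt x) * (x ^ (k+1) / (((k+1).factorial : ℝ) * ((k+1+1).factorial : ℝ)))) := by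
        exact hR.tsum_le_tsum key (((hS.mul_left _).add (hS'.mul_left _)).mul_left _)
    _ = (1/2) * ((1 / Real.sqrt x) * Sf x + (1 / Real.sqrt x) * ∑' k : ℕ, x ^ (k+1) / (((k+1).factorial : ℝ) * ((k+1+1).factorial : ℝ))) := by
        rw [tsum_mul_left, (hS.mul_left _).tsum_add (hS'.mul_left _), tsum_mul_left, tsum_mul_left]
        rfl
    _ ≤ (1/2) * ((1 / Real.sqrt x) * Sf x + (1 / Real.sqrt x) * Sf x) := by gcongr
    _ = _ := by ring

lemma wallis (k : ℕ) : ∫ θ in (0:ℝ)..Real.pi, Real.cos θ ^ (2*k) =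
    Real.pi * ((2*k).factorial : ℝ) / (4^k * (k.factorial : ℝ)^2) := by
  induction k with
  | zero => simp
  | succ n ih =>
    rw [show 2*(n+1) = 2*n+2 by ring, integral_cos_pow, ih]
    simp only [Real.sin_pi, Real.sin_zero, Nat.factorial_succ]
    push_cast
    field_simp
    ring

lemma wallis_odd (k : ℕ) : ∫ θ in (0:ℝ)..Real.pi, Real.cos θ ^ (2*k+1) = 0 := by
  induction k with
  | zero => simp
  | succ n ih =>
    rw [show 2*(n+1)+1 = (2*n+1)+2 by ring, integral_cos_pow, ih]
    simp

lemma moment (n : ℕ) : ∫ θ in (0:ℝ)..Real.pi, Real.cos θ ^ n * Real.sin θ ^ 2 =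
    (∫ θ in (0:ℝ)..Real.pi, Real.cos θ ^ n) / (n+2) := by
  have h : ∀ θ : ℝ, Real.cos θ ^ n * Real.sin θ ^ 2 = Real.cos θ ^ n - Real.cos θ ^ (n+2) := by
    intro θ; rw [Real.sin_sq]; ring
  simp_rw [h]
  rw [intervalIntegral.integral_sub (by apply Continuous.intervalIntegrable; fun_prop) (by apply Continuous.intervalIntegrable; fun_prop), integral_cos_pow]
  simp only [Real.sin_pi, Real.sin_zero]
  field_simp
  ring

lemma Sf_integral (z : ℝ) : ∫ θ in (0:ℝ)..Real.pi, Real.exp (z * Real.cos θ) * Real.sin θ ^ 2 =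
    Real.pi / 2 * Sf (z^2/4) := by
  have h1 : HasSum (fun n : ℕ => ∫ θ in (0:ℝ)..Real.pi, z^n / (n.factorial:ℝ) * (Real.cos θ ^ n * Real.sin θ ^ 2))
      (∫ θ in (0:ℝ)..Real.pi, Real.exp (z * Real.cos θ) * Real.sin θ ^ 2) := by
    apply intervalIntegral.hasSum_integral_of_dominated_convergence (fun n _ => |z|^n / (n.factorial:ℝ))
    · intro n
      apply Continuous.aestronglyMeasurable; fun_prop
    · intro n
      refine Eventually.of_forall fun θ _ => ?_
      rw [norm_mul, norm_mul, norm_div, norm_pow, norm_pow, norm_pow]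
      simp only [Real.norm_eq_abs]
      rw [abs_of_pos (by positivity : (0:ℝ) < (n.factorial:ℝ))]
      have a1 : |Real.cos θ| ^ n ≤ 1 := pow_le_one₀ (abs_nonneg _) (Real.abs_cos_le_one _)
      have a2 : |Real.sin θ| ^ 2 ≤ 1 := pow_le_one₀ (abs_nonneg _) (Real.abs_sin_le_one _)
      have a3 : |Real.cos θ| ^ n * |Real.sin θ| ^ 2 ≤ 1 := mul_le_one₀ a1 (by positivity) a2
      exact mul_le_of_le_one_right (by positivity) a3
    · exact Eventually.of_forall fun θ _ => Real.summable_pow_div_factorial |z|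
    · exact intervalIntegrable_const
    · refine Eventually.of_forall fun θ _ => ?_
      have := (NormedSpace.expSeries_div_hasSum_exp (z * Real.cos θ)).mul_right (Real.sin θ ^ 2)
      rw [← Real.exp_eq_exp_ℝ] at this
      have hfun : (fun n : ℕ => z^n / (n.factorial:ℝ) * (Real.cos θ ^ n * Real.sin θ ^ 2)) =
          fun n : ℕ => (z * Real.cos θ) ^ n / (n.factorial:ℝ) * Real.sin θ ^ 2 := by
        funext n; rw [mul_pow]; ring
      rw [hfun]
      exact this
  have h2 : HasSum (fun k : ℕ => Real.pi / 2 * ((z^2/4) ^ k / ((k.factorial : ℝ) * ((k+1).factorial : ℝ))))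
      (Real.pi / 2 * Sf (z^2/4)) := (summable_aux 1 (z^2/4)).hasSum.mul_left _
  have h3 : HasSum (fun n : ℕ => ∫ θ in (0:ℝ)..Real.pi, z^n / (n.factorial:ℝ) * (Real.cos θ ^ n * Real.sin θ ^ 2))
      (Real.pi / 2 * Sf (z^2/4) + 0) := by
    apply HasSum.even_add_odd
    · convert h2 using 2 with k
      rw [intervalIntegral.integral_const_mul, moment, wallis, div_pow, ← pow_mul, Nat.factorial_succ k]
      push_cast
      field_simp
      try ring
    · convert hasSum_zero with k
      rw [intervalIntegral.integral_const_mul, moment, wallis_odd]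
      simp
  simpa using h1.unique h3

noncomputable def phi (x : ℝ) : ℝ := x ^ (-(3:ℝ)/4) * Real.exp (2 * Real.sqrt x) / (2 * Real.sqrt Real.pi)

lemma Sf_integral2 (z : ℝ) : ∫ r in Set.Ioi (0:ℝ), Real.exp (-(z * r)) * (Real.sqrt r * Real.sqrt (2 - r)) =
    Real.exp (-z) * (Real.pi / 2 * Sf (z^2/4)) := by
  rw [← Sf_integral]
  have h := intervalIntegral.integral_comp_mul_deriv (a := 0) (b := Real.pi) (f := fun θ => 1 - Real.cos θ)
    (f' := Real.sin) (g := fun r => Real.exp (z * (1 - r)) * (Real.sqrt r * Real.sqrt (2 - r)))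
    (fun x _ => by simpa using (Real.hasDerivAt_cos x).const_sub 1) (by fun_prop) (by fun_prop)
  have e : ∫ θ in (0:ℝ)..Real.pi, Real.exp (z * Real.cos θ) * Real.sin θ ^ 2 =
      ∫ r in (0:ℝ)..2, Real.exp (z * (1 - r)) * (Real.sqrt r * Real.sqrt (2 - r)) := by
    rw [show (2:ℝ) = 1 - Real.cos Real.pi by simp; norm_num]
    rw [show (0:ℝ) = 1 - Real.cos 0 by simp] 
    nth_rw 1 [show 1 - Real.cos 0 = (0:ℝ) by simp] 
    simp only [Real.cos_pi] at h ⊢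
    rw [show (1:ℝ) - -1 = 2 by norm_num] at h ⊢
    rw [← h]
    apply intervalIntegral.integral_congr
    intro θ hθ
    rw [Set.uIcc_of_le Real.pi_pos.le] at hθ
    have hs : 0 ≤ Real.sin θ := Real.sin_nonneg_of_nonneg_of_le_pi hθ.1 hθ.2
    have hc := Real.cos_le_one θ
    simp only [Function.comp]
    rw [← Real.sqrt_mul (by linarith), show (1 - Real.cos θ) * (2 - (1 - Real.cos θ)) = Real.sin θ ^ 2 by
      rw [Real.sin_sq]; ring, Real.sqrt_sq hs]
    ring_nf
  rw [e, intervalIntegral.integral_of_le (by norm_num), ← integral_const_mul]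
  rw [← Set.Ioc_union_Ioi_eq_Ioi (show (0:ℝ) ≤ 2 by norm_num)]
  rw [integral_union_eq_left_of_forall measurableSet_Ioi]
  · apply integral_congr_ae
    refine Eventually.of_forall fun r => ?_
    simp only
    rw [← mul_assoc (Real.exp (-z)), ← Real.exp_add]
    ring_nf
  · intro r hr
    rw [Real.sqrt_eq_zero_of_nonpos (by linarith [Set.mem_Ioi.1 hr] : 2 - r ≤ 0)]
    simp

lemma Sf_asymp (x : ℝ) (hx : 0 < x) : |Sf x - phi x| ≤ phi x / Real.sqrt x := by
  set s := Real.sqrt x with hs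
  have hsp : 0 < s := Real.sqrt_pos.2 hx
  have hss : s ^ 2 = x := Real.sq_sqrt hx.le
  set z := 2 * s with hz
  have hzp : 0 < z := by positivity
  have hzx : z ^ 2 / 4 = x := by rw [hz, ← hss]; ring
  have hJ := Sf_integral2 z
  rw [hzx] at hJ
  set a := (1 / z) ^ ((3:ℝ)/2) with ha
  have hap : 0 < a := by positivity
  have i1 : ∫ r in Set.Ioi (0:ℝ), r ^ ((1:ℝ)/2) * Real.exp (-(z * r)) = a * (Real.sqrt Real.pi / 2) := by
    have := Real.integral_rpow_mul_exp_neg_mul_Ioi (a := 3/2) (r := z) (by norm_num) hzp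
    rw [show (3:ℝ)/2 - 1 = 1/2 by norm_num] at this
    rw [this, show Real.Gamma (3/2) = Real.sqrt Real.pi / 2 by
      rw [show (3:ℝ)/2 = 1/2 + 1 by norm_num, Real.Gamma_add_one (by norm_num), Real.Gamma_one_half_eq]; ring]
  have i2 : ∫ r in Set.Ioi (0:ℝ), r ^ ((3:ℝ)/2) * Real.exp (-(z * r)) = a * (1/z) * (3 * Real.sqrt Real.pi / 4) := by
    have := Real.integral_rpow_mul_exp_neg_mul_Ioi (a := 5/2) (r := z) (by norm_num) hzp
    rw [show (5:ℝ)/2 - 1 = 3/2 by norm_num] at this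
    rw [this, show Real.Gamma (5/2) = 3 * Real.sqrt Real.pi / 4 by
      rw [show (5:ℝ)/2 = 1/2 + 1 + 1 by norm_num, Real.Gamma_add_one (by norm_num), Real.Gamma_add_one (by norm_num), Real.Gamma_one_half_eq]; ring]
    rw [show (5:ℝ)/2 = 3/2 + 1 by norm_num, Real.rpow_add_one (by positivity)]
  have j1 : IntegrableOn (fun r : ℝ => r ^ ((1:ℝ)/2) * Real.exp (-(z * r))) (Set.Ioi 0) := by
    simpa using integrableOn_rpow_mul_exp_neg_mul_rpow (s := 1/2) (p := 1) (b := z) (by norm_num) (by norm_num) hzp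
  have j2 : IntegrableOn (fun r : ℝ => r ^ ((3:ℝ)/2) * Real.exp (-(z * r))) (Set.Ioi 0) := by
    simpa using integrableOn_rpow_mul_exp_neg_mul_rpow (s := 3/2) (p := 1) (b := z) (by norm_num) (by norm_num) hzp
  have h2 : 0 < Real.sqrt 2 := by positivity
  have h22 : Real.sqrt 2 * Real.sqrt 2 = 2 := Real.mul_self_sqrt (by norm_num)
  have pt : ∀ r ∈ Set.Ioi (0:ℝ), ‖Real.exp (-(z * r)) * (Real.sqrt r * Real.sqrt (2 - r)) - Real.sqrt 2 * (r ^ ((1:ℝ)/2) * Real.exp (-(z * r)))‖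
      ≤ (1 / Real.sqrt 2) * (r ^ ((3:ℝ)/2) * Real.exp (-(z * r))) := by
    intro r hr
    have hr : 0 < r := hr
    rw [show (3:ℝ)/2 = 1/2 + 1 by norm_num, Real.rpow_add_one hr.ne', ← Real.sqrt_eq_rpow]
    rw [show Real.exp (-(z * r)) * (Real.sqrt r * Real.sqrt (2 - r)) - Real.sqrt 2 * (Real.sqrt r * Real.exp (-(z * r)))
      = (Real.exp (-(z * r)) * Real.sqrt r) * (Real.sqrt (2 - r) - Real.sqrt 2) by ring, norm_mul,
      Real.norm_of_nonneg (by positivity)]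
    have : ‖Real.sqrt (2 - r) - Real.sqrt 2‖ ≤ 1 / Real.sqrt 2 * r := by
      have hle : Real.sqrt (2 - r) ≤ Real.sqrt 2 := Real.sqrt_le_sqrt (by linarith)
      rw [Real.norm_eq_abs, abs_of_nonpos (by linarith), one_div, inv_mul_eq_div, le_div_iff₀ h2]
      have h0 := Real.sqrt_nonneg (2 - r)
      by_cases h : r ≤ 2
      · have h3 : Real.sqrt (2-r) * Real.sqrt (2-r) = 2 - r := Real.mul_self_sqrt (by linarith)
        nlinarith
      · rw [Real.sqrt_eq_zero_of_nonpos (by linarith)]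
        nlinarith
    calc _ ≤ (Real.exp (-(z * r)) * Real.sqrt r) * (1 / Real.sqrt 2 * r) := by gcongr
      _ = _ := by ring
  have j3 : IntegrableOn (fun r : ℝ => Real.exp (-(z * r)) * (Real.sqrt r * Real.sqrt (2 - r)) - Real.sqrt 2 * (r ^ ((1:ℝ)/2) * Real.exp (-(z * r)))) (Set.Ioi 0) := by
    refine Integrable.mono' (j2.const_mul (1 / Real.sqrt 2)) (by
      apply Measurable.aestronglyMeasurable; fun_prop) ?_
    exact (ae_restrict_iff' measurableSet_Ioi).2 (Eventually.of_forall pt)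
  have main := norm_integral_le_of_norm_le (j2.const_mul (1 / Real.sqrt 2))
    ((ae_restrict_iff' measurableSet_Ioi).2 (Eventually.of_forall pt))
  have j4 : IntegrableOn (fun r : ℝ => Real.exp (-(z * r)) * (Real.sqrt r * Real.sqrt (2 - r))) (Set.Ioi 0) := by
    have := j3.add (j1.const_mul (Real.sqrt 2))
    refine this.congr (Eventually.of_forall fun r => ?_)
    simp
  rw [integral_sub j4 (j1.const_mul _), integral_const_mul, integral_const_mul, hJ, i1, i2, Real.norm_eq_abs] at main
  have hphi : phi x = 2 * Real.sqrt 2 * a * Real.exp z / (2 * Real.sqrt Real.pi) := by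
    unfold phi
    have : x ^ (-(3:ℝ)/4) = 2 * Real.sqrt 2 * a := by
      rw [ha, hz, one_div, Real.inv_rpow (by positivity), Real.mul_rpow (by norm_num) hsp.le, ← hss, ← Real.rpow_natCast, ← Real.rpow_mul hsp.le]
      rw [show ((2:ℕ):ℝ) * (-(3:ℝ)/4) = -(3/2) by norm_num, Real.rpow_neg hsp.le]
      rw [show (2:ℝ) ^ ((3:ℝ)/2) = 2 * Real.sqrt 2 by
        rw [show (3:ℝ)/2 = 1/2 + 1 by norm_num, Real.rpow_add_one (by norm_num), ← Real.sqrt_eq_rpow]; ring]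
      field_simp
    rw [this]
  have hpi : 0 < Real.sqrt Real.pi := Real.sqrt_pos.2 Real.pi_pos
  have hpp : Real.sqrt Real.pi * Real.sqrt Real.pi = Real.pi := Real.mul_self_sqrt Real.pi_pos.le
  have hE : Real.exp (-z) * Real.exp z = 1 := by rw [← Real.exp_add]; simp
  have e1 : Sf x - phi x = (2 * Real.exp z / Real.pi) * (Real.exp (-z) * (Real.pi / 2 * Sf x) - Real.sqrt 2 * (a * (Real.sqrt Real.pi / 2))) := by
    rw [hphi]
    have : (2 * Real.exp z / Real.pi) * (Real.exp (-z) * (Real.pi / 2 * Sf x) - Real.sqrt 2 * (a * (Real.sqrt Real.pi / 2)))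
      = (Real.exp (-z) * Real.exp z) * Sf x - Real.exp z * Real.sqrt 2 * a * Real.sqrt Real.pi / Real.pi := by
      have := Real.pi_pos.ne'
      field_simp
    rw [this, hE, one_mul]
    rw [mul_div_assoc (Real.exp z * Real.sqrt 2 * a), Real.sqrt_div_self']
    field_simp
  rw [e1, abs_mul, abs_of_pos (by have := Real.pi_pos; positivity)]
  calc _ ≤ (2 * Real.exp z / Real.pi) * (1 / Real.sqrt 2 * (a * (1 / z) * (3 * Real.sqrt Real.pi / 4))) := by
        have := Real.pi_pos
        gcongr
    _ = (3/8) * (phi x / s) := by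
        have hq : Real.sqrt Real.pi / Real.pi = 1 / Real.sqrt Real.pi := Real.sqrt_div_self'
        have h2i : 1 / Real.sqrt 2 = Real.sqrt 2 / 2 := Real.sqrt_div_self'.symm
        calc _ = Real.exp z * (1 / Real.sqrt 2) * a * (1/z) * (3/2) * (Real.sqrt Real.pi / Real.pi) := by ring
          _ = _ := by
            rw [hphi, hq, h2i, hz]
            field_simp
            try ring
    _ ≤ phi x / s := by
        have : 0 ≤ phi x / s := by rw [hphi]; positivity
        linarith

lemma phi_pos (x : ℝ) (hx : 0 < x) : 0 < phi x := by
  unfold phi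
  have := Real.pi_pos
  positivity

lemma one_le_phi (x : ℝ) (hx : 0 < x) : 1 ≤ (2 * Real.sqrt Real.pi) * phi x := by
  unfold phi
  have hpi : 0 < Real.sqrt Real.pi := Real.sqrt_pos.2 Real.pi_pos
  rw [mul_div_cancel₀ _ (by positivity), show -(3:ℝ)/4 = -(3/4) by norm_num, Real.rpow_neg hx.le, inv_mul_eq_div, le_div_iff₀ (by positivity), one_mul]
  have h1 : x ≤ Real.exp (2 * Real.sqrt x) := by
    have := Real.add_one_le_exp (Real.sqrt x)
    have h0 := Real.sqrt_nonneg x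
    rw [two_mul, Real.exp_add]
    nlinarith [Real.mul_self_sqrt hx.le]
  rcases le_total x 1 with h | h
  · exact (Real.rpow_le_one hx.le h (by norm_num)).trans (Real.one_le_exp (by positivity))
  · exact le_trans (by simpa using Real.rpow_le_rpow_of_exponent_le h (show (3:ℝ)/4 ≤ 1 by norm_num)) h1

lemma Sf_le_phi (x : ℝ) {c : ℝ} (hc : 0 < c) (hx : c ≤ x) : Sf x ≤ (1 + 1 / Real.sqrt c) * phi x := by
  have hx0 := hc.trans_le hx
  have := (abs_le.1 (Sf_asymp x hx0)).2
  have h1 : phi x / Real.sqrt x ≤ 1 / Real.sqrt c * phi x := by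
    rw [div_eq_mul_one_div, mul_comm]
    have := (phi_pos x hx0).le
    have : 0 < Real.sqrt c := Real.sqrt_pos.2 hc
    gcongr
  linarith

lemma phi_add_le (x y : ℝ) (hx : 0 < x) (hy : 0 ≤ y) : phi (x+y) ≤ phi x * Real.exp (2 * Real.sqrt y) := by
  unfold phi
  have hpi : 0 < Real.sqrt Real.pi := Real.sqrt_pos.2 Real.pi_pos
  rw [div_mul_eq_mul_div]
  have h1 : (x+y) ^ (-(3:ℝ)/4) ≤ x ^ (-(3:ℝ)/4) := Real.rpow_le_rpow_of_nonpos hx (by linarith) (by norm_num)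
  have h2 : Real.sqrt (x+y) ≤ Real.sqrt x + Real.sqrt y := by
    rw [Real.sqrt_le_left (by positivity)]
    nlinarith [Real.sq_sqrt hx.le, Real.sq_sqrt hy, Real.sqrt_nonneg x, Real.sqrt_nonneg y, mul_nonneg (Real.sqrt_nonneg x) (Real.sqrt_nonneg y)]
  rw [mul_assoc (x ^ (-(3:ℝ)/4)), ← Real.exp_add, ← mul_add]
  gcongr


lemma fact_aux (k r : ℕ) : (k+1).factorial * (r+1).factorial ≤ (k+(r+1)).factorial := by
  induction r with
  | zero => simp
  | succ r ih =>
    rw [Nat.factorial_succ (r+1), show k + (r+1+1) = (k+(r+1)) + 1 by ring, Nat.factorial_succ (k+(r+1))]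
    calc _ = (r+1+1) * ((k+1).factorial * (r+1).factorial) := by ring
      _ ≤ (k+(r+1)+1) * (k+(r+1)).factorial := Nat.mul_le_mul (by omega) ih

lemma term_bound (lam t η₁ η₂ p q : ℝ) (ht : 0 < t) (hlam : 0 < lam) (hη₁ : 0 < η₁) (hη₂ : 0 < η₂)
    (hp : 0 < p) (hq : 0 < q) (hpq : p + q = 1) (m k : ℕ) :
    Real.exp (-(lam*t)) * ((lam*t*q)^k / (k.factorial:ℝ)) * ((lam*t*(η₁/(η₁+η₂)*p))^m / (m.factorial:ℝ)) ≤
      poisCoef lam t (m+k) * Qcoef η₁ η₂ p q (m+k) k ∧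
    poisCoef lam t (m+k) * Qcoef η₁ η₂ p q (m+k) k ≤
    Real.exp (-(lam*t)) * ((lam*t*q)^k / (k.factorial:ℝ)) * ((lam*t*(η₁/(η₁+η₂)*p))^m / (m.factorial:ℝ)) +
     (lam*t*q)^k / ((k+1).factorial:ℝ) * ((4*(lam*t))^m / (m.factorial:ℝ)) := by
  have hβ : 0 < lam * t := by positivity
  set β := lam * t with hβd
  unfold poisCoef
  rw [← hβd]
  set θ := η₁/(η₁+η₂) with hθd
  have hθ0 : 0 < θ := by positivity
  have hθ1 : θ ≤ 1 := by rw [hθd, div_le_one (by positivity)]; linarith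
  rcases m with _ | m
  · have : Qcoef η₁ η₂ p q (0+k) k = q ^ k := by simp [Qcoef]
    rw [this, mul_pow β q k]
    simp only [Nat.zero_add, pow_zero, Nat.factorial_zero, Nat.cast_one]
    have h0 : (0:ℝ) ≤ β^k*q^k / ((k+1).factorial:ℝ) := by positivity
    constructor
    · apply le_of_eq; ring
    · have : Real.exp (-β) * β^k / (k.factorial:ℝ) * q^k = Real.exp (-β) * (β^k*q^k / (k.factorial:ℝ)) * (1/1) := by ring
      rw [this]
      linarith
  · have hQ : Qcoef η₁ η₂ p q (m+1+k) k = ∑ r ∈ Finset.range (m+1), (m.choose r : ℝ) * ((m+1+k).choose (k+r) : ℝ) *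
        θ ^ (m+1-r) * (η₂/(η₁+η₂)) ^ r * p ^ (m+1-r) * q ^ (k+r) := by
      unfold Qcoef
      rw [if_neg (by omega), Finset.sum_Ico_eq_sum_range]
      rw [show m+1+k-k = m+1 by omega, show m+1-1 = m by omega]
      refine Finset.sum_congr rfl fun r hr => ?_
      rw [show k + r - k = r by omega, show m+1+k-(k+r) = m+1-r by omega]
    set θ' := η₂/(η₁+η₂) with hθd'
    have hθ0' : 0 < θ' := by positivity
    have hθ1' : θ' ≤ 1 := by rw [hθd', div_le_one (by positivity)]; linarith
    rw [hQ, Finset.sum_range_succ']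
    have hmain : Real.exp (-β) * β ^ (m+1+k) / ((m+1+k).factorial:ℝ) * ((m.choose 0 : ℝ) * ((m+1+k).choose (k+0) : ℝ) *
        θ ^ (m+1-0) * θ' ^ 0 * p ^ (m+1-0) * q ^ (k+0)) =
        Real.exp (-β) * ((β*q)^k / (k.factorial:ℝ)) * ((β*(θ*p))^(m+1) / ((m+1).factorial:ℝ)) := by
      rw [Nat.cast_choose ℝ (show k + 0 ≤ m+1+k by omega), show m+1+k-(k+0) = m+1 by omega]
      simp only [Nat.choose_zero_right, Nat.cast_one, Nat.sub_zero, Nat.add_zero, pow_zero]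
      field_simp
      ring
    rw [mul_add, hmain, Finset.mul_sum]
    have hterm : ∀ r ∈ Finset.range m, Real.exp (-β) * β ^ (m+1+k) / ((m+1+k).factorial:ℝ) * ((m.choose (r+1) : ℝ) * ((m+1+k).choose (k+(r+1)) : ℝ) *
        θ ^ (m+1-(r+1)) * θ' ^ (r+1) * p ^ (m+1-(r+1)) * q ^ (k+(r+1))) ≤
        (β*q)^k / ((k+1).factorial:ℝ) * ((2*β)^(m+1) / ((m+1).factorial:ℝ)) * (m.choose (r+1) : ℝ) := by
      intro r hr
      have hrm : r < m := Finset.mem_range.1 hr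
      rw [Nat.cast_choose ℝ (show k + (r+1) ≤ m+1+k by omega), show m+1+k-(k+(r+1)) = m+1-(r+1) by omega]
      have b1 : θ ^ (m+1-(r+1)) ≤ 1 := pow_le_one₀ hθ0.le hθ1
      have b2 : θ' ^ (r+1) ≤ 1 := pow_le_one₀ hθ0'.le hθ1'
      have b3 : p ^ (m+1-(r+1)) ≤ 1 := pow_le_one₀ hp.le (by linarith)
      have b4 : q ^ (k+(r+1)) ≤ q ^ k := pow_le_pow_of_le_one hq.le (by linarith) (by omega)
      have b5 : Real.exp (-β) ≤ 1 := Real.exp_le_one_iff.2 (by linarith)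
      have b6 : (((k+1).factorial:ℝ) * ((r+1).factorial : ℝ)) ≤ ((k+(r+1)).factorial:ℝ) := by exact_mod_cast fact_aux k r
      have b7 : ((m+1).factorial:ℝ) / (((r+1).factorial:ℝ) * ((m+1-(r+1)).factorial:ℝ)) ≤ 2^(m+1) := by
        rw [← Nat.cast_choose ℝ (show r+1 ≤ m+1 by omega)]
        exact_mod_cast Nat.choose_le_two_pow _ _
      calc _ = Real.exp (-β) * β ^ (m+1+k) * (m.choose (r+1) : ℝ) * (1 / (((k+(r+1)).factorial:ℝ) * ((m+1-(r+1)).factorial:ℝ))) *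
            (θ ^ (m+1-(r+1)) * θ' ^ (r+1) * p ^ (m+1-(r+1)) * q ^ (k+(r+1))) := by
              field_simp
        _ ≤ 1 * β ^ (m+1+k) * (m.choose (r+1) : ℝ) * (1 / ((((k+1).factorial:ℝ) * ((r+1).factorial : ℝ)) * ((m+1-(r+1)).factorial:ℝ))) *
            (1 * 1 * 1 * q ^ k) := by
              gcongr
        _ = (β*q)^k / ((k+1).factorial:ℝ) * (β^(m+1) * (((m+1).factorial:ℝ) / (((r+1).factorial:ℝ) * ((m+1-(r+1)).factorial:ℝ))) / ((m+1).factorial:ℝ)) * (m.choose (r+1) : ℝ) := by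
              field_simp
              ring
        _ ≤ (β*q)^k / ((k+1).factorial:ℝ) * (β^(m+1) * 2^(m+1) / ((m+1).factorial:ℝ)) * (m.choose (r+1) : ℝ) := by
              gcongr
        _ = _ := by rw [mul_pow 2 β]; ring
    have hnn : ∀ r ∈ Finset.range m, 0 ≤ Real.exp (-β) * β ^ (m+1+k) / ((m+1+k).factorial:ℝ) * ((m.choose (r+1) : ℝ) * ((m+1+k).choose (k+(r+1)) : ℝ) *
        θ ^ (m+1-(r+1)) * θ' ^ (r+1) * p ^ (m+1-(r+1)) * q ^ (k+(r+1))) := by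
      intro r _; positivity
    constructor
    · linarith [Finset.sum_nonneg hnn]
    · have h1 := Finset.sum_le_sum hterm
      have h2 : ∑ r ∈ Finset.range m, (m.choose (r+1) : ℝ) ≤ 2^(m+1) := by
        have h := Nat.sum_range_choose m
        rw [Finset.sum_range_succ'] at h
        have h3 : ∑ r ∈ Finset.range m, (m.choose (r+1)) ≤ 2^(m+1) := by
          have : 2^m ≤ 2^(m+1) := Nat.pow_le_pow_right (by norm_num) (by omega)
          omega
        exact_mod_cast h3
      have h4 : (β*q)^k / ((k+1).factorial:ℝ) * ((2*β)^(m+1) / ((m+1).factorial:ℝ)) * ∑ r ∈ Finset.range m, (m.choose (r+1) : ℝ) ≤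
          (β*q)^k / ((k+1).factorial:ℝ) * ((4*β)^(m+1) / ((m+1).factorial:ℝ)) := by
        calc _ ≤ (β*q)^k / ((k+1).factorial:ℝ) * ((2*β)^(m+1) / ((m+1).factorial:ℝ)) * 2^(m+1) := by gcongr
          _ = _ := by
            rw [show 4*β = (2*β)*2 by ring, mul_pow (2*β) 2]; ring
      rw [Finset.mul_sum] at h4
      linarith

lemma bCoef_bound (lam t η₁ η₂ p q : ℝ) (ht : 0 < t) (hlam : 0 < lam) (hη₁ : 0 < η₁) (hη₂ : 0 < η₂)
    (hp : 0 < p) (hq : 0 < q) (hpq : p + q = 1) (k : ℕ) :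
    Real.exp (η₁ * lam * t * p / (η₁ + η₂) - lam * t) * (η₂*lam*t*q) *
      ((η₂*lam*t*q)^k / ((k.factorial:ℝ) * ((k+1).factorial:ℝ))) ≤ bCoef lam t η₁ η₂ p q k ∧
    bCoef lam t η₁ η₂ p q k ≤ Real.exp (η₁ * lam * t * p / (η₁ + η₂) - lam * t) * (η₂*lam*t*q) *
      ((η₂*lam*t*q)^k / ((k.factorial:ℝ) * ((k+1).factorial:ℝ))) +
      Real.exp (4*(lam*t)) * (η₂*lam*t*q) *
      ((η₂*lam*t*q)^k / ((k.factorial:ℝ) * ((k+2).factorial:ℝ))) := by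
  have hb := fun m => term_bound lam t η₁ η₂ p q ht hlam hη₁ hη₂ hp hq hpq m (k+1)
  have expsum : ∀ y : ℝ, HasSum (fun m : ℕ => y^m / (m.factorial:ℝ)) (Real.exp y) := by
    intro y
    rw [Real.exp_eq_exp_ℝ]
    exact NormedSpace.expSeries_div_hasSum_exp y
  have s1 := (expsum (lam*t*(η₁/(η₁+η₂)*p))).mul_left (Real.exp (-(lam*t)) * ((lam*t*q)^(k+1) / ((k+1).factorial:ℝ)))
  have s2 := (expsum (4*(lam*t))).mul_left ((lam*t*q)^(k+1) / ((k+1+1).factorial:ℝ))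
  have hs : Summable (fun m => poisCoef lam t (m+(k+1)) * Qcoef η₁ η₂ p q (m+(k+1)) (k+1)) := by
    refine Summable.of_nonneg_of_le (fun m => le_trans (by positivity) (hb m).1) (fun m => (hb m).2) (s1.summable.add s2.summable)
  have l1 := hasSum_le (fun m => (hb m).1) s1 hs.hasSum
  have l2 := hasSum_le (fun m => (hb m).2) hs.hasSum (s1.add s2)
  have hE : Real.exp (η₁ * lam * t * p / (η₁ + η₂) - lam * t) = Real.exp (-(lam*t)) * Real.exp (lam*t*(η₁/(η₁+η₂)*p)) := by
    rw [← Real.exp_add]; congr 1; ring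
  have hk : 0 ≤ η₂ ^ (k + 1) / (k.factorial : ℝ) := by positivity
  unfold bCoef
  have l1' := mul_le_mul_of_nonneg_left l1 hk
  have l2' := mul_le_mul_of_nonneg_left l2 hk
  have e : (η₂*lam*t*q) = η₂ * (lam*t*q) := by ring
  constructor
  · refine le_trans (le_of_eq ?_) l1'
    rw [hE, e, mul_pow]
    field_simp
    ring
  · refine le_trans l2' (le_of_eq ?_)
    rw [hE, e, mul_pow]
    field_simp
    try ring

lemma aCoef_eq (lam t η₁ η₂ p q : ℝ) (k : ℕ) : aCoef lam t η₁ η₂ p q k = bCoef lam t η₂ η₁ q p k := by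
  unfold aCoef bCoef
  congr 2
  funext m
  congr 1
  unfold Pcoef Qcoef
  split_ifs
  · rfl
  · refine Finset.sum_congr rfl fun i _ => ?_
    rw [add_comm η₂ η₁]
    ring


lemma pow_sub_aux (u w : ℝ) (hw : 0 ≤ w) (huw : w ≤ u) (k : ℕ) :
    u^(k+1) - w^(k+1) ≤ (k+1) * u^k * (u-w) := by
  induction k with
  | zero => simp
  | succ k ih =>
    have hu : 0 ≤ u := hw.trans huw
    have h1 : w^(k+1) ≤ u^(k+1) := pow_le_pow_left₀ hw huw _
    calc u^(k+1+1) - w^(k+1+1) = u * (u^(k+1) - w^(k+1)) + w^(k+1) * (u - w) := by ring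
      _ ≤ u * ((k+1) * u^k * (u-w)) + u^(k+1) * (u-w) := by
        have : 0 ≤ u - w := by linarith
        gcongr
      _ = _ := by push_cast; ring

section
variable (b : ℕ → ℝ) (c A B : ℝ)

lemma ser_summable (hc : 0 < c) (hA : 0 ≤ A) (hB : 0 ≤ B)
    (hb : ∀ k : ℕ, A * (c^k / ((k.factorial:ℝ) * ((k+1).factorial:ℝ))) ≤ b k ∧
      b k ≤ A * (c^k / ((k.factorial:ℝ) * ((k+1).factorial:ℝ))) + B * (c^k / ((k.factorial:ℝ) * ((k+2).factorial:ℝ))))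
    (u : ℝ) : Summable (fun k => b k * u^k) := by
  have h0 : ∀ k, 0 ≤ b k := fun k => le_trans (by positivity) (hb k).1
  refine Summable.of_norm_bounded (((summable_aux 1 (c*|u|)).mul_left A).add ((summable_aux 2 (c*|u|)).mul_left B)) ?_
  intro k
  rw [norm_mul, norm_pow, Real.norm_of_nonneg (h0 k), Real.norm_eq_abs]
  calc _ ≤ _ := mul_le_mul_of_nonneg_right (hb k).2 (by positivity)
    _ = _ := by rw [mul_pow]; ring

lemma ser_meas (hs : ∀ u : ℝ, Summable (fun k => b k * u^k)) :
    Measurable (fun u : ℝ => ∑' k, b k * u^k) := by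
  refine measurable_of_tendsto_metrizable (f := fun n u => ∑ k ∈ Finset.range n, b k * u^k) (fun n => by fun_prop) ?_
  rw [tendsto_pi_nhds]
  intro u
  exact (hs u).hasSum.tendsto_sum_nat

lemma ser_bounds (hc : 0 < c) (hA : 0 ≤ A) (hB : 0 ≤ B)
    (hb : ∀ k : ℕ, A * (c^k / ((k.factorial:ℝ) * ((k+1).factorial:ℝ))) ≤ b k ∧
      b k ≤ A * (c^k / ((k.factorial:ℝ) * ((k+1).factorial:ℝ))) + B * (c^k / ((k.factorial:ℝ) * ((k+2).factorial:ℝ))))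
    (u : ℝ) (hu : 0 ≤ u) : A * Sf (c*u) ≤ ∑' k, b k * u^k ∧ ∑' k, b k * u^k ≤ A * Sf (c*u) + B * Rf (c*u) := by
  have hs := ser_summable b c A B hc hA hB hb u
  have s1 : HasSum (fun k : ℕ => A * ((c*u)^k / ((k.factorial:ℝ) * ((k+1).factorial:ℝ)))) (A * Sf (c*u)) :=
    (summable_aux 1 (c*u)).hasSum.mul_left A
  have s2 : HasSum (fun k : ℕ => B * ((c*u)^k / ((k.factorial:ℝ) * ((k+2).factorial:ℝ)))) (B * Rf (c*u)) :=
    (summable_aux 2 (c*u)).hasSum.mul_left B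
  constructor
  · refine hasSum_le (fun k => ?_) s1 hs.hasSum
    refine le_trans (le_of_eq ?_) (mul_le_mul_of_nonneg_right (hb k).1 (by positivity))
    rw [mul_pow]; ring
  · refine hasSum_le (fun k => ?_) hs.hasSum (s1.add s2)
    refine le_trans (mul_le_mul_of_nonneg_right (hb k).2 (by positivity)) (le_of_eq ?_)
    rw [mul_pow]; ring

lemma ser_le' (hc : 0 < c) (hA : 0 ≤ A) (hB : 0 ≤ B)
    (hb : ∀ k : ℕ, A * (c^k / ((k.factorial:ℝ) * ((k+1).factorial:ℝ))) ≤ b k ∧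
      b k ≤ A * (c^k / ((k.factorial:ℝ) * ((k+1).factorial:ℝ))) + B * (c^k / ((k.factorial:ℝ) * ((k+2).factorial:ℝ))))
    (k : ℕ) : b k ≤ (A+B) * (c^k / ((k.factorial:ℝ) * ((k+1).factorial:ℝ))) := by
  refine (hb k).2.trans ?_
  rw [add_mul]
  have : ((k+1).factorial:ℝ) ≤ ((k+2).factorial:ℝ) := by exact_mod_cast Nat.factorial_le (by omega)
  gcongr

lemma ser_exp (hc : 0 < c) (hA : 0 ≤ A) (hB : 0 ≤ B)
    (hb : ∀ k : ℕ, A * (c^k / ((k.factorial:ℝ) * ((k+1).factorial:ℝ))) ≤ b k ∧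
      b k ≤ A * (c^k / ((k.factorial:ℝ) * ((k+1).factorial:ℝ))) + B * (c^k / ((k.factorial:ℝ) * ((k+2).factorial:ℝ))))
    (u : ℝ) (hu : 0 ≤ u) : 0 ≤ ∑' k, b k * u^k ∧ ∑' k, b k * u^k ≤ (A+B) * Real.exp c * Real.exp u := by
  have h0 : ∀ k, 0 ≤ b k := fun k => le_trans (by positivity) (hb k).1
  have hs := ser_summable b c A B hc hA hB hb u
  have expsum : HasSum (fun m : ℕ => u^m / (m.factorial:ℝ)) (Real.exp u) := by
    rw [Real.exp_eq_exp_ℝ]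
    exact NormedSpace.expSeries_div_hasSum_exp u
  refine ⟨tsum_nonneg fun k => mul_nonneg (h0 k) (by positivity), ?_⟩
  refine hasSum_le (fun k => ?_) hs.hasSum (expsum.mul_left ((A+B) * Real.exp c))
  have h1 := ser_le' b c A B hc hA hB hb k
  have h2 : c^k / ((k+1).factorial:ℝ) ≤ Real.exp c := by
    have := Real.pow_div_factorial_le_exp c hc.le k
    refine le_trans ?_ this
    have : (k.factorial:ℝ) ≤ ((k+1).factorial:ℝ) := by exact_mod_cast Nat.factorial_le (by omega)
    gcongr
  calc b k * u^k ≤ (A+B) * (c^k / ((k.factorial:ℝ) * ((k+1).factorial:ℝ))) * u^k := by gcongr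
    _ = (A+B) * (c^k / ((k+1).factorial:ℝ)) * (u^k / (k.factorial:ℝ)) := by field_simp
    _ ≤ _ := by gcongr

lemma ser_diff (hc : 0 < c) (hA : 0 ≤ A) (hB : 0 ≤ B)
    (hb : ∀ k : ℕ, A * (c^k / ((k.factorial:ℝ) * ((k+1).factorial:ℝ))) ≤ b k ∧
      b k ≤ A * (c^k / ((k.factorial:ℝ) * ((k+1).factorial:ℝ))) + B * (c^k / ((k.factorial:ℝ) * ((k+2).factorial:ℝ))))
    (u w : ℝ) (hw : 0 ≤ w) (hwu : w ≤ u) :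
    |∑' k, b k * u^k - ∑' k, b k * w^k| ≤ (A+B) * c * (u-w) * Rf (c*u) := by
  have h0 : ∀ k, 0 ≤ b k := fun k => le_trans (by positivity) (hb k).1
  have hu : 0 ≤ u := hw.trans hwu
  have hs := ser_summable b c A B hc hA hB hb u
  have hs' := ser_summable b c A B hc hA hB hb w
  rw [← hs.tsum_sub hs']
  have hd := hs.sub hs'
  rw [hd.tsum_eq_zero_add]
  simp only [pow_zero, sub_self, zero_add]
  have hd1 := (summable_nat_add_iff 1).2 hd
  have hnn : ∀ k : ℕ, 0 ≤ b (k+1) * u^(k+1) - b (k+1) * w^(k+1) := by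
    intro k
    have := pow_le_pow_left₀ hw hwu (k+1)
    have := mul_le_mul_of_nonneg_left this (h0 (k+1))
    linarith
  rw [abs_of_nonneg (tsum_nonneg hnn)]
  have s2 : HasSum (fun k : ℕ => (A+B) * c * (u-w) * ((c*u)^k / ((k.factorial:ℝ) * ((k+2).factorial:ℝ)))) ((A+B) * c * (u-w) * Rf (c*u)) :=
    (summable_aux 2 (c*u)).hasSum.mul_left _
  refine hasSum_le (fun k => ?_) hd1.hasSum s2
  have h1 := ser_le' b c A B hc hA hB hb (k+1)
  have h2 := pow_sub_aux u w hw hwu k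
  have h3 : 0 ≤ u - w := by linarith
  calc b (k+1) * u^(k+1) - b (k+1) * w^(k+1) = b (k+1) * (u^(k+1) - w^(k+1)) := by ring
    _ ≤ b (k+1) * ((k+1) * u^k * (u-w)) := mul_le_mul_of_nonneg_left h2 (h0 _)
    _ ≤ ((A+B) * (c^(k+1) / (((k+1).factorial:ℝ) * ((k+1+1).factorial:ℝ)))) * ((k+1) * u^k * (u-w)) := by
        gcongr
    _ = _ := by
        rw [mul_pow, Nat.factorial_succ k, pow_succ]
        push_cast
        field_simp

lemma ser_final1 (hc : 0 < c) (hA : 0 ≤ A) (hB : 0 ≤ B)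
    (hb : ∀ k : ℕ, A * (c^k / ((k.factorial:ℝ) * ((k+1).factorial:ℝ))) ≤ b k ∧
      b k ≤ A * (c^k / ((k.factorial:ℝ) * ((k+1).factorial:ℝ))) + B * (c^k / ((k.factorial:ℝ) * ((k+2).factorial:ℝ)))) :
    ∃ K : ℝ, 0 ≤ K ∧ ∀ L : ℝ, 1 ≤ L →
      |∑' k, b k * L^k - A * phi (c*L)| ≤ K * (phi (c*L) / Real.sqrt L) := by
  have hcs : 0 < Real.sqrt c := Real.sqrt_pos.2 hc
  refine ⟨(A + B * (1 + 1 / Real.sqrt c)) / Real.sqrt c, by positivity, fun L hL => ?_⟩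
  have hL0 : 0 < L := by linarith
  have hLs : 0 < Real.sqrt L := Real.sqrt_pos.2 hL0
  have hcL : 0 < c * L := by positivity
  have hccL : c ≤ c * L := by nlinarith
  have h1 := ser_bounds b c A B hc hA hB hb L hL0.le
  have h2 := Rf_le (c*L) hcL
  have h3 := Sf_le_phi (c*L) hc hccL
  have h4 := Sf_asymp (c*L) hcL
  have hp := phi_pos (c*L) hcL
  rw [Real.sqrt_mul hc.le] at h2 h4
  have h5 : Rf (c*L) ≤ (1 + 1 / Real.sqrt c) * phi (c*L) / (Real.sqrt c * Real.sqrt L) :=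
    h2.trans (by gcongr)
  have h6 : |∑' k, b k * L^k - A * Sf (c*L)| ≤ B * ((1 + 1 / Real.sqrt c) * phi (c*L) / (Real.sqrt c * Real.sqrt L)) := by
    rw [abs_of_nonneg (by linarith [h1.1])]
    have := mul_le_mul_of_nonneg_left h5 hB
    linarith [h1.2]
  have h7 : |A * Sf (c*L) - A * phi (c*L)| ≤ A * (phi (c*L) / (Real.sqrt c * Real.sqrt L)) := by
    rw [← mul_sub, abs_mul, abs_of_nonneg hA]
    gcongr
  refine (abs_sub_le _ (A * Sf (c*L)) _).trans ((add_le_add h6 h7).trans (le_of_eq ?_))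
  field_simp
  try ring

lemma ser_final2 (hc : 0 < c) (hA : 0 ≤ A) (hB : 0 ≤ B)
    (hb : ∀ k : ℕ, A * (c^k / ((k.factorial:ℝ) * ((k+1).factorial:ℝ))) ≤ b k ∧
      b k ≤ A * (c^k / ((k.factorial:ℝ) * ((k+1).factorial:ℝ))) + B * (c^k / ((k.factorial:ℝ) * ((k+2).factorial:ℝ)))) :
    ∃ K : ℝ, 0 ≤ K ∧ ∀ L : ℝ, 1 ≤ L → ∀ v : ℝ, 0 ≤ L + v →
      |∑' k, b k * (L+v)^k - ∑' k, b k * L^k| ≤ K * (phi (c*L) / Real.sqrt L) * (|v| * Real.exp (2 * Real.sqrt (c*|v|))) := by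
  have hcs : 0 < Real.sqrt c := Real.sqrt_pos.2 hc
  have hRf : ∀ u : ℝ, 1 ≤ u → Rf (c*u) ≤ (1 + 1 / Real.sqrt c) / Real.sqrt c * (phi (c*u) / Real.sqrt u) := by
    intro u hu
    have hL0 : 0 < u := by linarith
    have hLs : 0 < Real.sqrt u := Real.sqrt_pos.2 hL0
    have hcL : 0 < c * u := by positivity
    have hccL : c ≤ c * u := by nlinarith
    have h2 := Rf_le (c*u) hcL
    have h3 := Sf_le_phi (c*u) hc hccL
    rw [Real.sqrt_mul hc.le] at h2
    calc _ ≤ _ := h2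
      _ ≤ (1 + 1 / Real.sqrt c) * phi (c*u) / (Real.sqrt c * Real.sqrt u) := by gcongr
      _ = _ := by field_simp
  set K0 := (1 + 1 / Real.sqrt c) / Real.sqrt c with hK0
  have hK0' : 0 ≤ K0 := by positivity
  refine ⟨(A+B) * c * K0, by positivity, fun L hL v hv => ?_⟩
  have hL0 : 0 < L := by linarith
  have hLs : 0 < Real.sqrt L := Real.sqrt_pos.2 hL0
  have hp := phi_pos (c*L) (by positivity)
  rcases le_total 0 v with h | h
  · have h1 := ser_diff b c A B hc hA hB hb (L+v) L hL0.le (by linarith)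
    have h2 := hRf (L+v) (by linarith)
    have h3 : phi (c*(L+v)) ≤ phi (c*L) * Real.exp (2 * Real.sqrt (c*v)) := by
      rw [mul_add]; exact phi_add_le _ _ (by positivity) (by positivity)
    have h4 : Real.sqrt L ≤ Real.sqrt (L+v) := Real.sqrt_le_sqrt (by linarith)
    rw [abs_of_nonneg h]
    calc _ ≤ _ := h1
      _ ≤ (A+B) * c * (L+v-L) * (K0 * (phi (c*L) * Real.exp (2 * Real.sqrt (c*v)) / Real.sqrt L)) := by
        have : 0 ≤ L + v - L := by linarith
        refine mul_le_mul_of_nonneg_left (h2.trans ?_) (by positivity)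
        gcongr
      _ = _ := by ring
  · have h1 := ser_diff b c A B hc hA hB hb L (L+v) hv (by linarith)
    have h2 := hRf L hL
    rw [abs_sub_comm, abs_of_nonpos h]
    have h5 : (1:ℝ) ≤ Real.exp (2 * Real.sqrt (c*(-v))) := Real.one_le_exp (by positivity)
    have hv' : 0 ≤ -v := by linarith
    calc _ ≤ _ := h1
      _ ≤ (A+B) * c * (L-(L+v)) * (K0 * (phi (c*L) / Real.sqrt L)) := by
        have : 0 ≤ L - (L + v) := by linarith
        exact mul_le_mul_of_nonneg_left h2 (by positivity)
      _ = (A+B) * c * K0 * (phi (c*L) / Real.sqrt L) * ((-v) * 1) := by ring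
      _ ≤ _ := by gcongr
end


lemma tendsto_log_inv : Tendsto (fun x : ℝ => Real.log x⁻¹) (nhdsWithin 0 (Set.Ioi 0)) atTop :=
  Real.tendsto_log_atTop.comp tendsto_inv_nhdsGT_zero

lemma sqrt_amgm (a ε s : ℝ) (hε : 0 < ε) (hs : 0 ≤ s) : a * Real.sqrt s ≤ ε * s + a^2/(4*ε) := by
  have h := Real.sq_sqrt hs
  have h2 : 0 ≤ (2 * ε * Real.sqrt s - a)^2 / (4*ε) := by positivity
  have h3 : (2 * ε * Real.sqrt s - a)^2 / (4*ε) = ε * (Real.sqrt s)^2 + a^2/(4*ε) - a * Real.sqrt s := by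
    field_simp
    ring
  rw [h3, h] at h2
  linarith

lemma exp_bound (c ε : ℝ) (hc : 0 < c) (hε : 0 < ε) :
    ∃ K : ℝ, 0 ≤ K ∧ ∀ s : ℝ, 0 ≤ s → s * Real.exp (2 * Real.sqrt (c*s)) ≤ K * Real.exp (ε * s) := by
  refine ⟨(2/ε) * Real.exp ((2*Real.sqrt c)^2/(4*(ε/2))), by positivity, fun s hs => ?_⟩
  have h1 : 2 * Real.sqrt (c*s) ≤ (ε/2) * s + (2*Real.sqrt c)^2/(4*(ε/2)) := by
    rw [Real.sqrt_mul hc.le, ← mul_assoc]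
    exact sqrt_amgm _ _ _ (by positivity) hs
  have h2 : s ≤ (2/ε) * Real.exp (ε/2 * s) := by
    have := Real.add_one_le_exp (ε/2 * s)
    calc s = (2/ε) * (ε/2*s) := by field_simp
      _ ≤ _ := by gcongr; linarith
  calc _ ≤ ((2/ε) * Real.exp (ε/2 * s)) * Real.exp ((ε/2) * s + (2*Real.sqrt c)^2/(4*(ε/2))) := by gcongr
    _ = (2/ε) * Real.exp ((2*Real.sqrt c)^2/(4*(ε/2))) * (Real.exp (ε/2 * s) * Real.exp (ε/2*s)) := by
      rw [Real.exp_add]; ring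
    _ = _ := by rw [← Real.exp_add]; congr 2; ring

lemma U_zero_bound (U : ℝ → ℝ) (Bt₁ At₂ At₃ κ ε : ℝ) (hε : 0 < ε)
    (hU_zero : (fun x => U x -
        Bt₁ * x ^ At₃ * Real.exp (At₂ * Real.sqrt (Real.log x⁻¹)) * (Real.log x⁻¹) ^ κ)
      =O[nhdsWithin 0 (Set.Ioi 0)] (fun x =>
        Bt₁ * x ^ At₃ * Real.exp (At₂ * Real.sqrt (Real.log x⁻¹)) * (Real.log x⁻¹) ^ κ *
          (Real.log x⁻¹) ^ (-(1:ℝ)/2))) :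
    ∃ δ K : ℝ, 0 < δ ∧ 0 ≤ K ∧ ∀ y : ℝ, 0 < y → y < δ → U y ≤ K * y ^ (At₃ - ε) := by
  obtain ⟨C, hC0, hC⟩ := hU_zero.exists_nonneg
  have hC := hC.bound
  have h1 : ∀ᶠ L : ℝ in atTop, L ^ κ ≤ Real.exp (ε/2 * L) := by
    filter_upwards [(isLittleO_rpow_exp_pos_mul_atTop κ (half_pos hε)).bound one_pos] with L hL
    rw [one_mul, Real.norm_of_nonneg (Real.exp_pos _).le] at hL
    exact (le_abs_self _).trans hL
  have h2 := tendsto_log_inv.eventually (h1.and (eventually_ge_atTop 1))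
  have h3 := hC.and h2
  rw [eventually_nhdsWithin_iff, Metric.eventually_nhds_iff] at h3
  obtain ⟨δ, hδ, h3⟩ := h3
  refine ⟨δ, (1+C) * (|Bt₁| * Real.exp (At₂^2/(4*(ε/2)))), hδ, by positivity, fun y hy0 hyδ => ?_⟩
  obtain ⟨hb, hk, hL1⟩ := h3 (y := y) (by rw [Real.dist_eq, sub_zero, abs_of_pos hy0]; exact hyδ) hy0
  set L := Real.log y⁻¹ with hL
  set M := Bt₁ * y ^ At₃ * Real.exp (At₂ * Real.sqrt L) * L ^ κ with hM
  have hL0 : 0 < L := by linarith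
  have hL2 : L ^ (-(1:ℝ)/2) ≤ 1 := Real.rpow_le_one_of_one_le_of_nonpos hL1 (by norm_num)
  rw [norm_mul, Real.norm_eq_abs, Real.norm_eq_abs, Real.norm_of_nonneg (by positivity)] at hb
  have hb2 : U y ≤ (1+C) * |M| := by
    have : C * (|M| * L ^ (-(1:ℝ)/2)) ≤ C * (|M| * 1) := by gcongr
    have h5 := le_abs_self (U y - M)
    have h6 := le_abs_self M
    linarith
  have hyL : Real.exp (ε * L) = y ^ (-ε) := by
    rw [Real.rpow_def_of_pos hy0, hL, Real.log_inv]; congr 1; ring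
  have hMb : |M| ≤ |Bt₁| * Real.exp (At₂^2/(4*(ε/2))) * y ^ (At₃ - ε) := by
    rw [hM, abs_mul, abs_mul, abs_mul, abs_of_pos (Real.rpow_pos_of_pos hy0 At₃), abs_of_pos (Real.exp_pos _), abs_of_pos (Real.rpow_pos_of_pos hL0 κ)]
    have h7 := sqrt_amgm At₂ (ε/2) L (by positivity) hL0.le
    calc _ ≤ |Bt₁| * y ^ At₃ * Real.exp (ε/2 * L + At₂^2/(4*(ε/2))) * Real.exp (ε/2 * L) := by gcongr
      _ = |Bt₁| * y ^ At₃ * Real.exp (At₂^2/(4*(ε/2))) * (Real.exp (ε/2 * L) * Real.exp (ε/2 * L)) := by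
        rw [Real.exp_add]; ring
      _ = |Bt₁| * y ^ At₃ * Real.exp (At₂^2/(4*(ε/2))) * Real.exp (ε * L) := by
        rw [← Real.exp_add]; congr 2; ring
      _ = _ := by rw [hyL, sub_eq_add_neg At₃ ε, Real.rpow_add hy0]; ring
  calc U y ≤ _ := hb2
    _ ≤ (1+C) * (|Bt₁| * Real.exp (At₂^2/(4*(ε/2))) * y ^ (At₃ - ε)) := by gcongr
    _ = _ := by ring

lemma V_integrable (U : ℝ → ℝ) (η₂ ε α δ K : ℝ) (hε : 0 < ε) (hεη : ε ≤ η₂) (hα : -1 < α - η₂ - ε) (hδ : 0 < δ)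
    (hU_meas : Measurable U) (hU_nonneg : ∀ x, 0 ≤ U x) (hUi : IntegrableOn U (Set.Ioi 0))
    (hb : ∀ y : ℝ, 0 < y → y < δ → U y ≤ K * y ^ α) (σ : ℝ) (hσ1 : -ε ≤ σ) (hσ2 : σ ≤ ε):
    IntegrableOn (fun y => y ^ (-η₂) * U y * y ^ σ) (Set.Ioi 0) := by
  rw [← Set.Ioo_union_Ici_eq_Ioi hδ]
  refine IntegrableOn.union ?_ ?_
  · have h1 : IntegrableOn (fun y : ℝ => y ^ (α - η₂ + σ)) (Set.Ioo 0 δ) :=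
      (intervalIntegral.integrableOn_Ioo_rpow_iff hδ).2 (by linarith)
    refine Integrable.mono' (h1.const_mul K) (by apply Measurable.aestronglyMeasurable; fun_prop) ?_
    refine (ae_restrict_iff' measurableSet_Ioo).2 (Eventually.of_forall fun y hy => ?_)
    have hy0 := hy.1
    have := hb y hy.1 hy.2
    rw [Real.norm_of_nonneg (by have := hU_nonneg y; positivity)]
    calc _ ≤ y ^ (-η₂) * (K * y ^ α) * y ^ σ := by gcongr
      _ = _ := by rw [Real.rpow_add hy0, sub_eq_add_neg, Real.rpow_add hy0]; ring
  · have h1 : IntegrableOn U (Set.Ici δ) := hUi.mono_set (fun y hy => lt_of_lt_of_le hδ hy)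
    refine Integrable.mono' (h1.const_mul (δ ^ (-η₂ + σ))) (by apply Measurable.aestronglyMeasurable; fun_prop) ?_
    refine (ae_restrict_iff' measurableSet_Ici).2 (Eventually.of_forall fun y hy => ?_)
    have hy0 : 0 < y := lt_of_lt_of_le hδ hy
    rw [Real.norm_of_nonneg (by have := hU_nonneg y; positivity)]
    have h2 : y ^ (-η₂ + σ) ≤ δ ^ (-η₂ + σ) := Real.rpow_le_rpow_of_nonpos hδ hy (by linarith)
    calc _ = y ^ (-η₂ + σ) * U y := by rw [Real.rpow_add hy0]; ring
      _ ≤ _ := mul_le_mul_of_nonneg_right h2 (hU_nonneg y)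

lemma mellinConv_eq (U H : ℝ → ℝ) (x : ℝ) (hx : 0 < x) :
    mellinConv U H x = ∫ y in Set.Ioi (0:ℝ), U y * H (x / y) / y := by
  unfold mellinConv
  rw [← integral_comp_rpow_Ioi (fun s => U (x / s) * H s / s) (show (-1:ℝ) ≠ 0 by norm_num)]
  have h := integral_comp_mul_left_Ioi (fun y => U y * H (x / y) / y) 0 hx
  rw [mul_zero] at h
  have h2 : ∫ y in Set.Ioi (0:ℝ), U y * H (x / y) / y = x * ∫ s in Set.Ioi (0:ℝ), U (x*s) * H (x / (x*s)) / (x*s) := by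
    rw [h, smul_eq_mul, mul_inv_cancel_left₀ hx.ne']
  rw [h2, ← integral_const_mul]
  refine setIntegral_congr_fun measurableSet_Ioi fun s hs => ?_
  have hs : 0 < s := hs
  simp only [smul_eq_mul]
  rw [Real.rpow_neg_one, show (-1:ℝ) - 1 = ((-2:ℤ):ℝ) by norm_num, Real.rpow_intCast, show x / (x*s) = s⁻¹ by field_simp, show x / s⁻¹ = x*s by field_simp]
  rw [zpow_neg]
  norm_num
  field_simp

lemma exp_abs_log_le (y ε : ℝ) (hy : 0 < y) : Real.exp (ε * |Real.log y|) ≤ y ^ ε + y ^ (-ε) := by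
  rw [Real.rpow_def_of_pos hy, Real.rpow_def_of_pos hy]
  rcases le_total 0 (Real.log y) with h | h
  · rw [abs_of_nonneg h, mul_comm]
    linarith [Real.exp_pos (Real.log y * -ε)]
  · rw [abs_of_nonpos h, show ε * -Real.log y = Real.log y * -ε by ring]
    linarith [Real.exp_pos (Real.log y * ε)]


lemma conv_bound (t lam η₁ η₂ p q : ℝ) (U : ℝ → ℝ)
    (ht : 0 < t) (hlam : 0 < lam) (hη₁ : 1 < η₁) (hη₂ : 0 < η₂)
    (hp : 0 < p) (hq : 0 < q) (hpq : p + q = 1)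
    (hU_meas : Measurable U) (hU_nonneg : ∀ x, 0 ≤ U x) (ε : ℝ) (hε : 0 < ε)
    (hw : IntegrableOn (fun y => y ^ (-η₂) * U y) (Set.Ioi 0))
    (hV : IntegrableOn (fun y => y ^ (-η₂) * U y * (y ^ ε + y ^ (-ε))) (Set.Ioi 0)) :
    ∃ K : ℝ, 0 ≤ K ∧ ∀ x : ℝ, 0 < x → 1 ≤ Real.log x⁻¹ →
      |mellinConv U (Hfun lam t η₁ η₂ p q) x - (∫ y in Set.Ioi (0:ℝ), y ^ (-η₂) * U y) *
        (Real.exp (η₁ * lam * t * p / (η₁ + η₂) - lam * t) * (η₂*lam*t*q)) * phi (η₂*lam*t*q * Real.log x⁻¹) * x ^ (η₂ - 1)| ≤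
      K * (x ^ (η₂ - 1) * (phi (η₂*lam*t*q * Real.log x⁻¹) / Real.sqrt (Real.log x⁻¹))) := by
  have hη₁0 : 0 < η₁ := by linarith
  have hbb := bCoef_bound lam t η₁ η₂ p q ht hlam hη₁0 hη₂ hp hq hpq
  have haa := bCoef_bound lam t η₂ η₁ q p ht hlam hη₂ hη₁0 hq hp (by linarith)
  simp_rw [← aCoef_eq] at haa
  have hc : 0 < η₂*lam*t*q := by positivity
  have hc' : 0 < η₁*lam*t*p := by positivity
  set c := η₂*lam*t*q with hcd
  set c' := η₁*lam*t*p with hcd'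
  set A := Real.exp (c' / (η₁ + η₂) - lam * t) * c with hA
  set B := Real.exp (4*(lam*t)) * c with hB
  set A' := Real.exp (c / (η₂ + η₁) - lam * t) * c' with hA'
  set B' := Real.exp (4*(lam*t)) * c' with hB'
  have hA0 : 0 ≤ A := by positivity
  have hB0 : 0 ≤ B := by positivity
  have hA0' : 0 ≤ A' := by positivity
  have hB0' : 0 ≤ B' := by positivity
  set b := bCoef lam t η₁ η₂ p q with hbd
  set a := aCoef lam t η₁ η₂ p q with had
  obtain ⟨K1, hK1, hG1⟩ := ser_final1 b c A B hc hA0 hB0 hbb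
  obtain ⟨K2, hK2, hG2⟩ := ser_final2 b c A B hc hA0 hB0 hbb
  obtain ⟨K3, hK3, hexp⟩ := exp_bound c ε hc hε
  have hGa := ser_exp a c' A' B' hc' hA0' hB0' haa
  set K4 := (A' + B') * Real.exp c' with hK4d
  have hK4 : 0 ≤ K4 := by positivity
  have hGm : Measurable (G2m lam t η₁ η₂ p q) := ser_meas b (ser_summable b c A B hc hA0 hB0 hbb)
  have hGm' : Measurable (G1 lam t η₁ η₂ p q) := ser_meas a (ser_summable a c' A' B' hc' hA0' hB0' haa)
  have hHm : Measurable (Hfun lam t η₁ η₂ p q) := by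
    unfold Hfun H1fun H2fun
    refine Measurable.ite measurableSet_Ioi ?_ ?_
    · exact (hGm'.comp Real.measurable_log).mul (by fun_prop)
    · exact (hGm.comp (Real.measurable_log.comp measurable_inv)).mul (by fun_prop)
  have hsp : 0 < 2 * Real.sqrt Real.pi := by have := Real.pi_pos; positivity
  set K5 := K2 * K3 + (K4 * (2 * Real.sqrt Real.pi) + (A + K1)) * K3 with hK5d
  have hK5 : 0 ≤ K5 := by positivity
  set m := ∫ y in Set.Ioi (0:ℝ), y ^ (-η₂) * U y with hm
  set MV := ∫ y in Set.Ioi (0:ℝ), y ^ (-η₂) * U y * (y ^ ε + y ^ (-ε)) with hMV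
  have hm0 : 0 ≤ m := setIntegral_nonneg measurableSet_Ioi fun y hy => by
    have := hU_nonneg y
    have : (0:ℝ) < y := hy
    positivity
  have hMV0 : 0 ≤ MV := setIntegral_nonneg measurableSet_Ioi fun y hy => by
    have := hU_nonneg y
    have : (0:ℝ) < y := hy
    positivity
  refine ⟨K5 * MV + m * K1, by positivity, fun x hx hL1 => ?_⟩
  set L := Real.log x⁻¹ with hL
  have hL0 : 0 < L := by linarith
  have hLs1 : 1 ≤ Real.sqrt L := by rw [Real.one_le_sqrt]; exact hL1
  have hLs : 0 < Real.sqrt L := by linarith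
  have hLss : Real.sqrt L ≤ L := by nlinarith [Real.mul_self_sqrt hL0.le]
  have hφ := phi_pos (c*L) (by positivity)
  have hφ1 := one_le_phi (c*L) (by positivity)
  have hX : 0 < x ^ (η₂ - 1) := Real.rpow_pos_of_pos hx _
  set Gv := G2m lam t η₁ η₂ p q L with hGL
  have hG1L : |Gv - A * phi (c*L)| ≤ K1 * (phi (c*L) / Real.sqrt L) := hG1 L hL1
  have hGL0 : 0 ≤ Gv := (ser_exp b c A B hc hA0 hB0 hbb L hL0.le).1
  have hGLle : Gv ≤ (A + K1) * phi (c*L) := by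
    have h1 := (abs_le.1 hG1L).2
    have h2 : phi (c*L) / Real.sqrt L ≤ phi (c*L) := div_le_self hφ.le hLs1
    have h3 := mul_le_mul_of_nonneg_left h2 hK1
    linarith
  have pt : ∀ y ∈ Set.Ioi (0:ℝ), ‖U y * Hfun lam t η₁ η₂ p q (x / y) / y - x ^ (η₂ - 1) * Gv * (y ^ (-η₂) * U y)‖ ≤
      K5 * (x ^ (η₂ - 1) * (phi (c*L) / Real.sqrt L)) * (y ^ (-η₂) * U y * (y ^ ε + y ^ (-ε))) := by
    intro y hy
    have hy : 0 < y := hy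
    have hUy := hU_nonneg y
    have hylog := (hexp |Real.log y| (abs_nonneg _)).trans (mul_le_mul_of_nonneg_left (exp_abs_log_le y ε hy) hK3)
    rw [Real.norm_eq_abs]
    by_cases hxy : 1 < x / y
    · have hyx : y < x := by rwa [one_lt_div hy] at hxy
      have hg := hGa (Real.log (x/y)) (Real.log_nonneg hxy.le)
      rw [Real.exp_log (by positivity)] at hg
      have hH : Hfun lam t η₁ η₂ p q (x/y) = G1 lam t η₁ η₂ p q (Real.log (x/y)) * (x/y) ^ (-η₁ - 1) := by
        simp [Hfun, hxy, H1fun]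
      have hg1 : 0 ≤ G1 lam t η₁ η₂ p q (Real.log (x/y)) := hg.1
      have hg2 : G1 lam t η₁ η₂ p q (Real.log (x/y)) ≤ K4 * (x/y) := hg.2
      have hF0 : 0 ≤ U y * Hfun lam t η₁ η₂ p q (x / y) / y := by rw [hH]; positivity
      have hF1 : U y * Hfun lam t η₁ η₂ p q (x / y) / y ≤ x ^ (η₂ - 1) * K4 * (y ^ (-η₂) * U y) := by
        rw [hH]
        have e1 : (x/y) ^ (-η₁ - 1) ≤ (x/y) ^ (-(2:ℝ)) := Real.rpow_le_rpow_of_exponent_le hxy.le (by linarith)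
        have e2 : (x/y) ^ (-(2:ℝ)) = (y/x)^2 := by
          rw [Real.rpow_neg (by positivity), show (2:ℝ) = ((2:ℕ):ℝ) by norm_num, Real.rpow_natCast, ← inv_pow, inv_div]
        have e3 : 1 ≤ x ^ η₂ * y ^ (-η₂) := by
          rw [Real.rpow_neg hy.le, ← div_eq_mul_inv, ← Real.div_rpow hx.le hy.le]
          exact Real.one_le_rpow hxy.le hη₂.le
        calc _ ≤ U y * (K4 * (x/y) * (y/x)^2) / y := by rw [← e2]; gcongr
          _ = K4 * U y / x * 1 := by field_simp
          _ ≤ K4 * U y / x * (x ^ η₂ * y ^ (-η₂)) := by gcongr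
          _ = _ := by rw [Real.rpow_sub_one hx.ne']; ring
      have hw0 : 0 ≤ y ^ (-η₂) * U y := by positivity
      have h1 : |U y * Hfun lam t η₁ η₂ p q (x / y) / y - x ^ (η₂ - 1) * Gv * (y ^ (-η₂) * U y)| ≤
          x ^ (η₂ - 1) * (K4 + Gv) * (y ^ (-η₂) * U y) := by
        have : 0 ≤ x ^ (η₂ - 1) * Gv * (y ^ (-η₂) * U y) := by positivity
        have : 0 ≤ x ^ (η₂ - 1) * K4 * (y ^ (-η₂) * U y) := by positivity
        have e : x ^ (η₂ - 1) * (K4 + Gv) * (y ^ (-η₂) * U y) = x ^ (η₂ - 1) * K4 * (y ^ (-η₂) * U y) + x ^ (η₂ - 1) * Gv * (y ^ (-η₂) * U y) := by ring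
        rw [e, abs_le]
        constructor <;> linarith
      have h2 : K4 + Gv ≤ (K4 * (2 * Real.sqrt Real.pi) + (A + K1)) * phi (c*L) := by
        have := mul_le_mul_of_nonneg_left hφ1 hK4
        linarith
      have hlogy : L ≤ |Real.log y| := by
        have h3 : Real.log y ≤ Real.log x := Real.log_le_log hy hyx.le
        have h4 : L = - Real.log x := Real.log_inv x
        exact le_trans (by linarith) (neg_le_abs _)
      have h3 : phi (c*L) ≤ phi (c*L) / Real.sqrt L * (K3 * (y ^ ε + y ^ (-ε))) := by
        rw [div_mul_eq_mul_div, le_div_iff₀ hLs]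
        have h5 : |Real.log y| ≤ |Real.log y| * Real.exp (2 * Real.sqrt (c * |Real.log y|)) :=
          le_mul_of_one_le_right (abs_nonneg _) (Real.one_le_exp (by positivity))
        exact mul_le_mul_of_nonneg_left (by linarith) hφ.le
      have hK6 : 0 ≤ K4 * (2 * Real.sqrt Real.pi) + (A + K1) := by positivity
      calc _ ≤ _ := h1
        _ ≤ x ^ (η₂ - 1) * ((K4 * (2 * Real.sqrt Real.pi) + (A + K1)) * phi (c*L)) * (y ^ (-η₂) * U y) := by gcongr
        _ ≤ x ^ (η₂ - 1) * ((K4 * (2 * Real.sqrt Real.pi) + (A + K1)) * (phi (c*L) / Real.sqrt L * (K3 * (y ^ ε + y ^ (-ε))))) * (y ^ (-η₂) * U y) := by gcongr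
        _ = ((K4 * (2 * Real.sqrt Real.pi) + (A + K1)) * K3) * (x ^ (η₂ - 1) * (phi (c*L) / Real.sqrt L)) * (y ^ (-η₂) * U y * (y ^ ε + y ^ (-ε))) := by ring
        _ ≤ _ := by
          have : 0 ≤ K2 * K3 := by positivity
          gcongr
          linarith
    · have hyx : x ≤ y := by rwa [one_lt_div hy, not_lt] at hxy
      have hlog : Real.log (x/y)⁻¹ = L + Real.log y := by
        rw [hL, inv_div, Real.log_div hy.ne' hx.ne', Real.log_inv]; ring
      have hH : Hfun lam t η₁ η₂ p q (x/y) = G2m lam t η₁ η₂ p q (L + Real.log y) * (x/y) ^ (η₂ - 1) := by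
        rw [← hlog]
        simp only [Hfun, hxy, H2fun, if_false]
      have hLv : 0 ≤ L + Real.log y := by
        rw [← hlog]
        apply Real.log_nonneg
        rw [inv_div, one_le_div hx]; exact hyx
      have hd : |G2m lam t η₁ η₂ p q (L + Real.log y) - Gv| ≤ _ := hG2 L hL1 (Real.log y) hLv
      have e : U y * Hfun lam t η₁ η₂ p q (x / y) / y - x ^ (η₂ - 1) * Gv * (y ^ (-η₂) * U y) =
          x ^ (η₂ - 1) * (y ^ (-η₂) * U y) * (G2m lam t η₁ η₂ p q (L + Real.log y) - Gv) := by
        rw [hH, Real.div_rpow hx.le hy.le, Real.rpow_sub_one hy.ne', Real.rpow_neg hy.le]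
        have := (Real.rpow_pos_of_pos hy η₂).ne'
        field_simp
      rw [e, abs_mul, abs_of_nonneg (by positivity)]
      calc _ ≤ x ^ (η₂ - 1) * (y ^ (-η₂) * U y) * (K2 * (phi (c*L) / Real.sqrt L) * (K3 * (y ^ ε + y ^ (-ε)))) := by
            refine mul_le_mul_of_nonneg_left (hd.trans ?_) (by positivity)
            exact mul_le_mul_of_nonneg_left hylog (by positivity)
        _ = (K2 * K3) * (x ^ (η₂ - 1) * (phi (c*L) / Real.sqrt L)) * (y ^ (-η₂) * U y * (y ^ ε + y ^ (-ε))) := by ring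
        _ ≤ _ := by
          have : 0 ≤ (K4 * (2 * Real.sqrt Real.pi) + (A + K1)) * K3 := by positivity
          gcongr
          linarith
  have hpt := (ae_restrict_iff' (μ := volume) measurableSet_Ioi).2 (Eventually.of_forall pt)
  have hint : IntegrableOn (fun y => U y * Hfun lam t η₁ η₂ p q (x / y) / y - x ^ (η₂ - 1) * Gv * (y ^ (-η₂) * U y)) (Set.Ioi 0) := by
    refine Integrable.mono' (hV.const_mul _) ?_ hpt
    apply Measurable.aestronglyMeasurable
    have : Measurable (fun y => Hfun lam t η₁ η₂ p q (x / y)) := hHm.comp (by fun_prop)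
    fun_prop
  have hint2 : IntegrableOn (fun y => U y * Hfun lam t η₁ η₂ p q (x / y) / y) (Set.Ioi 0) := by
    have := hint.add (hw.const_mul (x ^ (η₂ - 1) * Gv))
    refine this.congr (Eventually.of_forall fun r => ?_)
    simp
  have hnorm := norm_integral_le_of_norm_le (hV.const_mul _) hpt
  rw [integral_sub hint2 (hw.const_mul _), integral_const_mul, integral_const_mul, ← mellinConv_eq U _ x hx, Real.norm_eq_abs, ← hm, ← hMV] at hnorm
  have h2 : |x ^ (η₂ - 1) * Gv * m - m * A * phi (c*L) * x ^ (η₂ - 1)| ≤ m * x ^ (η₂ - 1) * (K1 * (phi (c*L) / Real.sqrt L)) := by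
    rw [show x ^ (η₂ - 1) * Gv * m - m * A * phi (c*L) * x ^ (η₂ - 1) = m * x ^ (η₂ - 1) * (Gv - A * phi (c*L)) by ring, abs_mul, abs_of_nonneg (by positivity)]
    gcongr
  refine (abs_sub_le _ (x ^ (η₂ - 1) * Gv * m) _).trans ((add_le_add hnorm h2).trans (le_of_eq ?_))
  ring


lemma main_rewrite (m C c L y : ℝ) (hc : 0 < c) (hL : 0 < L) :
    1 / (2 * √Real.pi) * m * c ^ ((1:ℝ)/4) * C * L ^ (-(3:ℝ)/4) *
      Real.exp (2 * √c * √L) * y = m * (C * c) * phi (c * L) * y := by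
  have h1 : c * c ^ (-(3:ℝ)/4) = c ^ ((1:ℝ)/4) := by
    nth_rewrite 1 [← Real.rpow_one c]
    rw [← Real.rpow_add hc]; norm_num
  unfold phi
  rw [Real.mul_rpow hc.le hL.le, Real.sqrt_mul hc.le, ← h1, ← mul_assoc 2 (√c) (√L)]
  ring

lemma sqrt_exp_bound (g L : ℝ) (hg : 0 < g) (hL : 1 ≤ L) :
    Real.exp (-(g * L)) ≤ (1/g) * (1 / √L) := by
  have hs : 1 ≤ √L := by rw [Real.one_le_sqrt]; exact hL
  have hs2 : √L * √L = L := Real.mul_self_sqrt (by linarith)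
  have h1 : g * L ≤ Real.exp (g * L) := by linarith [Real.add_one_le_exp (g * L)]
  rw [Real.exp_neg, ← one_div, one_div_mul_one_div]
  apply one_div_le_one_div_of_le (by positivity)
  have h2 : √L ≤ L := by nlinarith
  exact (mul_le_mul_of_nonneg_left h2 hg.le).trans h1

/-- Theorem: density asymptotics at zero when the jump part
dominates, `Ã₃ > η₂ − 1`.  Let `U` be a probability density on `(0,∞)` with the
Heston-type asymptotics at infinity and zero, and let
`D(x) = e^{−λt} U(x) + (U ⋆_M H(t,·))(x)`.  Then the moment `m_{−η₂}(U)` is finite and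
`D(x) = (1/(2√π)) m_{−η₂}(U) (η₂λtq)^{1/4} exp{η₁λtp/(η₁+η₂) − λt} (log(1/x))^{−3/4}`
`· exp{2√(η₂λtq) √(log(1/x))} x^{η₂−1} (1 + O((log(1/x))^{−1/2}))` as `x → 0`. -/
theorem density_asymptotics_jump_dominates_at_zero
    (t lam η₁ η₂ p q : ℝ) (U : ℝ → ℝ) (B₁ Bt₁ A₂ At₂ A₃ At₃ κ : ℝ)
    (ht : 0 < t) (hlam : 0 < lam) (hη₁ : 1 < η₁) (hη₂ : 0 < η₂)
    (hp : 0 < p) (hq : 0 < q) (hpq : p + q = 1)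
    (hB₁ : 0 < B₁) (hBt₁ : 0 < Bt₁) (hA₃ : 2 < A₃) (hAt₃ : η₂ - 1 < At₃)
    (hU_meas : Measurable U) (hU_nonneg : ∀ x, 0 ≤ U x)
    (hU_prob : (∫ x in Set.Ioi (0:ℝ), U x) = 1)
    -- `U(x) = B₁ x^{−A₃} exp{A₂√(log x)} (log x)^κ (1 + O((log x)^{−1/2}))` as `x → ∞`
    (hU_infty : (fun x => U x -
        B₁ * x ^ (-A₃) * Real.exp (A₂ * Real.sqrt (Real.log x)) * (Real.log x) ^ κ)
      =O[atTop] (fun x =>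
        B₁ * x ^ (-A₃) * Real.exp (A₂ * Real.sqrt (Real.log x)) * (Real.log x) ^ κ *
          (Real.log x) ^ (-(1:ℝ)/2)))
    -- `U(x) = B̃₁ x^{Ã₃} exp{Ã₂√(log(1/x))} (log(1/x))^κ (1 + O((log(1/x))^{−1/2}))` as `x → 0`
    (hU_zero : (fun x => U x -
        Bt₁ * x ^ At₃ * Real.exp (At₂ * Real.sqrt (Real.log x⁻¹)) * (Real.log x⁻¹) ^ κ)
      =O[nhdsWithin 0 (Set.Ioi 0)] (fun x =>
        Bt₁ * x ^ At₃ * Real.exp (At₂ * Real.sqrt (Real.log x⁻¹)) * (Real.log x⁻¹) ^ κ *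
          (Real.log x⁻¹) ^ (-(1:ℝ)/2))) :
    MeasureTheory.IntegrableOn (fun x => x ^ (-η₂) * U x) (Set.Ioi 0) ∧
    (fun x => (Real.exp (-(lam * t)) * U x +
        mellinConv U (Hfun lam t η₁ η₂ p q) x) -
        1 / (2 * Real.sqrt Real.pi) * (∫ y in Set.Ioi (0:ℝ), y ^ (-η₂) * U y) *
          (η₂ * lam * t * q) ^ ((1:ℝ)/4) *
          Real.exp (η₁ * lam * t * p / (η₁ + η₂) - lam * t) *
          (Real.log x⁻¹) ^ (-(3:ℝ)/4) *
          Real.exp (2 * Real.sqrt (η₂ * lam * t * q) * Real.sqrt (Real.log x⁻¹)) *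
          x ^ (η₂ - 1))
      =O[nhdsWithin 0 (Set.Ioi 0)]
      (fun x =>
        1 / (2 * Real.sqrt Real.pi) * (∫ y in Set.Ioi (0:ℝ), y ^ (-η₂) * U y) *
          (η₂ * lam * t * q) ^ ((1:ℝ)/4) *
          Real.exp (η₁ * lam * t * p / (η₁ + η₂) - lam * t) *
          (Real.log x⁻¹) ^ (-(3:ℝ)/4) *
          Real.exp (2 * Real.sqrt (η₂ * lam * t * q) * Real.sqrt (Real.log x⁻¹)) *
          x ^ (η₂ - 1) * (Real.log x⁻¹) ^ (-(1:ℝ)/2)) := by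
  have hUi : IntegrableOn U (Set.Ioi 0) := by
    by_contra h
    rw [integral_undef h] at hU_prob
    exact zero_ne_one hU_prob
  obtain ⟨ε, hε, hε1, hε2⟩ : ∃ ε : ℝ, 0 < ε ∧ ε ≤ (At₃ - η₂ + 1) / 4 ∧ ε ≤ η₂ / 2 :=
    ⟨min ((At₃ - η₂ + 1) / 4) (η₂ / 2), lt_min (by linarith) (by linarith),
      min_le_left _ _, min_le_right _ _⟩
  obtain ⟨δ, K, hδ, hK, hb⟩ := U_zero_bound U Bt₁ At₂ At₃ κ ε hε hU_zero
  have hV0 := V_integrable U η₂ ε (At₃ - ε) δ K hε (by linarith) (by linarith) hδ hU_meas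
    hU_nonneg hUi hb
  have hw : IntegrableOn (fun y => y ^ (-η₂) * U y) (Set.Ioi 0) := by
    have := hV0 0 (by linarith) (by linarith)
    simpa using this
  have hV : IntegrableOn (fun y => y ^ (-η₂) * U y * (y ^ ε + y ^ (-ε))) (Set.Ioi 0) := by
    have h1 := hV0 ε (by linarith) (by linarith)
    have h2 := hV0 (-ε) (by linarith) (by linarith)
    have := h1.add h2
    refine this.congr (ae_of_all _ fun y => ?_)
    simp only [Pi.add_apply]
    ring
  refine ⟨hw, ?_⟩
  obtain ⟨K₂, hK₂, hconv⟩ := conv_bound t lam η₁ η₂ p q U ht hlam hη₁ hη₂ hp hq hpq hU_meas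
    hU_nonneg ε hε hw hV
  have hwn : ∀ y ∈ Set.Ioi (0:ℝ), 0 ≤ y ^ (-η₂) * U y := fun y hy =>
    mul_nonneg (Real.rpow_nonneg (le_of_lt hy) _) (hU_nonneg y)
  have hm : 0 < ∫ y in Set.Ioi (0:ℝ), y ^ (-η₂) * U y := by
    rcases (setIntegral_nonneg measurableSet_Ioi hwn).lt_or_eq with h | h
    · exact h
    exfalso
    have h0 := (setIntegral_eq_zero_iff_of_nonneg_ae
      ((ae_restrict_iff' measurableSet_Ioi).2 (ae_of_all _ hwn)) hw).1 h.symm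
    have : (∫ x in Set.Ioi (0:ℝ), U x) = 0 := by
      apply integral_eq_zero_of_ae
      filter_upwards [h0, ae_restrict_mem measurableSet_Ioi] with y hy hy0
      have : (0:ℝ) < y ^ (-η₂) := Real.rpow_pos_of_pos hy0 _
      simpa [this.ne'] using hy
    rw [this] at hU_prob
    exact zero_ne_one hU_prob
  have hc : 0 < η₂ * lam * t * q := by positivity
  set m := ∫ y in Set.Ioi (0:ℝ), y ^ (-η₂) * U y with hmdef
  set c := η₂ * lam * t * q with hcdef
  set C := Real.exp (η₁ * lam * t * p / (η₁ + η₂) - lam * t) with hCdef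
  have hC : 0 < C := Real.exp_pos _
  set g := At₃ - ε - (η₂ - 1) with hg
  have hgp : 0 < g := by linarith
  have hden : 0 < m * (C * c) := by positivity
  refine IsBigO.of_bound ((K * (1 / g) * (2 * √Real.pi) + K₂) / (m * (C * c))) ?_
  filter_upwards [tendsto_log_inv.eventually (eventually_ge_atTop 1), self_mem_nhdsWithin,
    mem_nhdsWithin_of_mem_nhds (Iio_mem_nhds hδ)] with x hL hx0 hxδ
  have hx : 0 < x := hx0
  have hLp : 0 < Real.log x⁻¹ := by linarith
  rw [main_rewrite m C c (Real.log x⁻¹) _ hc hLp]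
  have hcv := hconv x hx hL
  have hLx : Real.log x = - Real.log x⁻¹ := by rw [Real.log_inv]; ring
  set L := Real.log x⁻¹ with hLdef
  have hph : 0 < phi (c * L) := phi_pos _ (by positivity)
  have hx1 : 0 < x ^ (η₂ - 1) := Real.rpow_pos_of_pos hx _
  have hsL : 0 < √L := Real.sqrt_pos.2 hLp
  have hLh : L ^ (-(1:ℝ)/2) = 1 / √L := by
    rw [neg_div, Real.rpow_neg hLp.le, Real.sqrt_eq_rpow]; exact (one_div _).symm
  have hUx : Real.exp (-(lam * t)) * U x ≤
      K * (1 / g) * (2 * √Real.pi) * (x ^ (η₂ - 1) * (phi (c * L) / √L)) := by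
    have e1 : Real.exp (-(lam * t)) ≤ 1 := Real.exp_le_one_iff.2 (by
      have := mul_pos hlam ht
      linarith)
    have e2 : x ^ (At₃ - ε) = x ^ (η₂ - 1) * Real.exp (-(g * L)) := by
      have : Real.exp (-(g * L)) = x ^ g := by
        rw [Real.rpow_def_of_pos hx, hLx]; congr 1; ring
      rw [this, ← Real.rpow_add hx]; congr 1; rw [hg]; ring
    have e3 := sqrt_exp_bound g L hgp hL
    have e4 := one_le_phi (c * L) (by positivity)
    calc Real.exp (-(lam * t)) * U x ≤ 1 * U x :=
          mul_le_mul_of_nonneg_right e1 (hU_nonneg x)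
      _ ≤ K * (x ^ (η₂ - 1) * Real.exp (-(g * L))) := by
          rw [one_mul, ← e2]; exact hb x hx hxδ
      _ ≤ K * (x ^ (η₂ - 1) * ((1 / g) * (1 / √L))) := by gcongr
      _ = K * (x ^ (η₂ - 1) * ((1 / g) * (1 / √L))) * 1 := by ring
      _ ≤ K * (x ^ (η₂ - 1) * ((1 / g) * (1 / √L))) * ((2 * √Real.pi) * phi (c * L)) := by
          gcongr
      _ = _ := by ring
  have hUx0 : 0 ≤ Real.exp (-(lam * t)) * U x := mul_nonneg (Real.exp_pos _).le (hU_nonneg x)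
  have hR : ‖m * (C * c) * phi (c * L) * x ^ (η₂ - 1) * L ^ (-(1:ℝ)/2)‖ =
      (m * (C * c)) * (x ^ (η₂ - 1) * (phi (c * L) / √L)) := by
    rw [hLh, Real.norm_of_nonneg (by positivity)]; ring
  rw [hR, ← mul_assoc (_ / _) (m * (C * c)), div_mul_cancel₀ _ hden.ne', Real.norm_eq_abs, add_sub_assoc]
  refine (abs_add_le _ _).trans ?_
  rw [abs_of_nonneg hUx0, add_mul]
  exact add_le_add hUx hcv
end
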